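/- For each i ∈ {1,…,n}, the 𝓗-invariant prime ideal Q_{w_0, s_i w_0} of O_q(G) equals the ideal generated by the single element c^{ϖ_i}_{−ϖ_i, w_0ϖ_i}, and the 𝓗-invariant prime ideal Q_{w_0 s_i, w_0} equals the ideal generated by the single element c^{ϖ_i}_{−w_0ϖ_i, ϖ_i}. -/

import Mathlib

open scoped TensorProduct

/-- The `q`-factorial `(q - q⁻¹)(q² - q⁻²)⋯(qᵐ - q⁻ᵐ)`. -/
noncomputable def qfac (t : ℂ) (m : ℕ) : ℂ :=
  ∏ j ∈ Finset.range m, (t ^ (j + 1) - t⁻¹ ^ (j + 1))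

/-- The `q`-binomial coefficient `[m k]` at parameter `t`. -/
noncomputable def qbinom (t : ℂ) (m k : ℕ) : ℂ :=
  qfac t m / (qfac t k * qfac t (m - k))

/-- The defining relations of the quantised enveloping algebra `U_q(𝔤)` associated to a
Cartan matrix `a` with symmetrising integers `d`, on elements `E i`, `F i`, `K i` of a
`ℂ`-algebra `B`: the `K i` are commuting units, conjugation by `K i` rescales `E j` and
`F j` by `q_i^{±a i j}` (where `q_i = q^{d i}`), the commutator `[E i, F j]` is
`δ_{ij} (K_i - K_i⁻¹)/(q_i - q_i⁻¹)`, and the quantum Serre relations hold. -/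
def UqRels (q : ℂ) {n : ℕ} (a : Fin n → Fin n → ℤ) (d : Fin n → ℕ)
    (B : Type) [Ring B] [Algebra ℂ B] (E F : Fin n → B) (K : Fin n → Bˣ) : Prop :=
  (∀ i j, (K i : B) * (K j : B) = (K j : B) * (K i : B)) ∧
  (∀ i j, (K i : B) * E j = (q ^ ((d i : ℤ) * a i j)) • (E j * (K i : B))) ∧
  (∀ i j, (K i : B) * F j = (q ^ (-((d i : ℤ) * a i j))) • (F j * (K i : B))) ∧
  (∀ i j, E i * F j - F j * E i =
    if i = j then (q ^ (d i : ℤ) - q ^ (-(d i : ℤ)))⁻¹ • ((K i : B) - (((K i)⁻¹ : Bˣ) : B))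
    else 0) ∧
  (∀ i j, i ≠ j → ∑ k ∈ Finset.range ((1 - a i j).toNat + 1),
      ((-1 : ℂ) ^ k * qbinom (q ^ (d i : ℤ)) ((1 - a i j).toNat) k) •
        (E i ^ ((1 - a i j).toNat - k) * E j * E i ^ k) = 0) ∧
  (∀ i j, i ≠ j → ∑ k ∈ Finset.range ((1 - a i j).toNat + 1),
      ((-1 : ℂ) ^ k * qbinom (q ^ (d i : ℤ)) ((1 - a i j).toNat) k) •
        (F i ^ ((1 - a i j).toNat - k) * F j * F i ^ k) = 0)

/-- The weight space of weight `μ = ∑ μ i ϖ i` in a `U_q(𝔤)`-module: the set of vectors on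
which each `K i` acts by the scalar `q^{(μ, α_i)} = q^{μ i * d i}`. -/
noncomputable def wtSp (q : ℂ) {n : ℕ} (d : Fin n → ℕ)
    {U : Type} [Ring U] [Algebra ℂ U] (K : Fin n → Uˣ)
    {Vc : Type} [AddCommGroup Vc] [Module ℂ Vc] (ρ : U →ₐ[ℂ] Module.End ℂ Vc)
    (μ : Fin n → ℤ) : Submodule ℂ Vc :=
  ⨅ i : Fin n, LinearMap.ker (ρ (K i : U) - (q ^ (μ i * (d i : ℤ))) • (1 : Module.End ℂ Vc))

/-- `ξ` is a dual vector of weight `μ`:  equivalently (via the antipode-twisted action on the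
dual module), `ξ` vanishes on every weight space of weight `ν ≠ -μ`. -/
noncomputable def inDualWt (q : ℂ) {n : ℕ} (d : Fin n → ℕ)
    {U : Type} [Ring U] [Algebra ℂ U] (K : Fin n → Uˣ)
    {Vc : Type} [AddCommGroup Vc] [Module ℂ Vc] (ρ : U →ₐ[ℂ] Module.End ℂ Vc)
    (μ : Fin n → ℤ) (ξ : Module.Dual ℂ Vc) : Prop :=
  ∀ ν : Fin n → ℤ, ν ≠ -μ → ∀ x ∈ wtSp q d K ρ ν, ξ x = 0

/-- The Demazure-type submodule generated by the weight space of weight `ν` under the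
subalgebra of `U` generated by `gens` (take `gens = Set.range E` for `V⁺_w(λ)` with
`ν = wλ`, and `gens = Set.range F` for `V⁻_w(λ)`). -/
noncomputable def demazure (q : ℂ) {n : ℕ} (d : Fin n → ℕ)
    {U : Type} [Ring U] [Algebra ℂ U] (gens : Set U) (K : Fin n → Uˣ)
    {Vc : Type} [AddCommGroup Vc] [Module ℂ Vc] (ρ : U →ₐ[ℂ] Module.End ℂ Vc)
    (ν : Fin n → ℤ) : Submodule ℂ Vc :=
  Submodule.span ℂ
    {x | ∃ y ∈ Algebra.adjoin ℂ gens, ∃ u ∈ wtSp q d K ρ ν, x = ρ y u}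

/-- A two-sided ideal of a (possibly noncommutative) ring is prime if it is proper and
`x R y ⊆ P` implies `x ∈ P` or `y ∈ P`. -/
def IsPrimeTwoSided {R : Type*} [Ring R] (P : TwoSidedIdeal R) : Prop :=
  P ≠ ⊤ ∧ ∀ x y : R, (∀ r : R, x * r * y ∈ P) → x ∈ P ∨ y ∈ P

/-- An element `r` of a ring is normal if `rR = Rr`. -/
def IsNormalElem {R : Type*} [Ring R] (r : R) : Prop :=
  (∀ x, ∃ y, r * x = y * r) ∧ ∀ x, ∃ y, x * r = r * y

/-- The ideal `Q⁺_{w}` of `O_q(G)`: generated by the coordinate functions `c^{ϖ_j}_{ξ,v}` with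
`v` a highest weight vector of `V(ϖ_j)` and `ξ` orthogonal to the Demazure module
`V⁺_w(ϖ_j)`. -/
noncomputable def Qplus (q : ℂ) {n : ℕ} (d : Fin n → ℕ)
    {U : Type} [Ring U] [Algebra ℂ U] (E : Fin n → U) (K : Fin n → Uˣ)
    {V : (Fin n → ℕ) → Type} [∀ c, AddCommGroup (V c)] [∀ c, Module ℂ (V c)]
    (ρ : ∀ c, U →ₐ[ℂ] Module.End ℂ (V c))
    {W : Type} [Group W] (σ : W →* Multiplicative (AddAut (Fin n → ℤ)))
    {A : Type} [Ring A]
    (cf : ∀ c : Fin n → ℕ, Module.Dual ℂ (V c) → V c → A)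
    (w : W) : TwoSidedIdeal A :=
  TwoSidedIdeal.span
    {x | ∃ j : Fin n, ∃ ξ : Module.Dual ℂ (V (Pi.single j 1)),
      ∃ v ∈ wtSp q d K (ρ (Pi.single j 1)) (fun k => ((Pi.single j 1 : Fin n → ℕ) k : ℤ)),
        (∀ y ∈ demazure q d (Set.range E) K (ρ (Pi.single j 1))
            (σ w (fun k => ((Pi.single j 1 : Fin n → ℕ) k : ℤ))), ξ y = 0) ∧
        x = cf (Pi.single j 1) ξ v}

/-- The ideal `Q⁻_{w}` of `O_q(G)`: generated by the coordinate functions `c^{ϖ_j}_{ξ,v}` with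
`v` a lowest weight vector of `V(ϖ_j)` and `ξ` orthogonal to the Demazure module
`V⁻_{w w₀}(ϖ_j)`. -/
noncomputable def Qminus (q : ℂ) {n : ℕ} (d : Fin n → ℕ)
    {U : Type} [Ring U] [Algebra ℂ U] (F : Fin n → U) (K : Fin n → Uˣ)
    {V : (Fin n → ℕ) → Type} [∀ c, AddCommGroup (V c)] [∀ c, Module ℂ (V c)]
    (ρ : ∀ c, U →ₐ[ℂ] Module.End ℂ (V c))
    {W : Type} [Group W] (σ : W →* Multiplicative (AddAut (Fin n → ℤ))) (w₀ : W)
    {A : Type} [Ring A]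
    (cf : ∀ c : Fin n → ℕ, Module.Dual ℂ (V c) → V c → A)
    (w : W) : TwoSidedIdeal A :=
  TwoSidedIdeal.span
    {x | ∃ j : Fin n, ∃ ξ : Module.Dual ℂ (V (Pi.single j 1)),
      ∃ v ∈ wtSp q d K (ρ (Pi.single j 1)) (σ w₀ (fun k => ((Pi.single j 1 : Fin n → ℕ) k : ℤ))),
        (∀ y ∈ demazure q d (Set.range F) K (ρ (Pi.single j 1))
            (σ (w * w₀) (fun k => ((Pi.single j 1 : Fin n → ℕ) k : ℤ))), ξ y = 0) ∧
        x = cf (Pi.single j 1) ξ v}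

/-!
The ideals `Q⁺_w` and `Q⁻_w` are generated by matrix coefficients `c_{ξ,v}` in which `v` runs
over an extremal weight line of `V(ϖ_j)` and `ξ` over the annihilator of a Demazure module, so
everything reduces to computing Demazure modules.

Since `q` is not a root of unity, `U_q(𝔰𝔩₂)`-strings show that the weights of a
finite-dimensional module are stable under `W`; applied to `V(λ)` this gives `λ - wλ ∈ Q⁺` for `λ`
dominant. Simple roots are linearly independent because `W` is finite: a functional killing them
is `W`-invariant, and `∑ wμ = 0` for every weight `μ`. Hence `V⁻_1(ϖ_j) = V⁺_{w₀}(ϖ_j) = V(ϖ_j)`,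
and `Q⁻_{w₀}` and `Q⁺_{w₀}` vanish.

The only weight of the form `ϖ_i - α_k` is `s_iϖ_i`, so `V(ϖ_i)` is the sum of its highest weight
line and `V⁻_{s_i}(ϖ_i)`, whose annihilator is thus the line of covectors of weight `-ϖ_i`. For
`j ≠ i`, `s_iϖ_j = ϖ_j` and `V⁻_{s_i}(ϖ_j)` is everything. So `Q⁻_{s_iw₀}` is generated by one
coefficient. Exchanging the roles of `E` and `F` and negating weights turns `V(ϖ_i)` into a
module of highest weight `-w₀ϖ_i`, and the same argument computes `Q⁺_{w₀s_i}`.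
-/

theorem not_isOfFinOrder_of_transcendental {R A : Type*} [CommRing R] [Nontrivial R] [Ring A]
    [Algebra R A] {x : A} (hx : Transcendental R x) : ¬IsOfFinOrder x := fun h => by
  obtain ⟨m, hm, hxm⟩ := isOfFinOrder_iff_pow_eq_one.mp h
  exact hx.pow hm (hxm ▸ isAlgebraic_one)

section QuantumInt

variable {𝕜 : Type*} [Field 𝕜] {t : 𝕜}

/-- The quantum integer `[m] = (tᵐ - t⁻ᵐ) / (t - t⁻¹)` at the parameter `t`. It has the junk value
`0` when `t ^ 2 = 1` or `t = 0`. -/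
def quantumInt (t : 𝕜) (m : ℤ) : 𝕜 :=
  (t ^ m - t ^ (-m)) / (t - t⁻¹)

theorem quantumInt_neg (t : 𝕜) (m : ℤ) : quantumInt t (-m) = -quantumInt t m := by
  rw [quantumInt, quantumInt, neg_neg, ← neg_div, neg_sub]

theorem zpow_sub_zpow_neg_ne_zero (ht₀ : t ≠ 0) (ht : ¬IsOfFinOrder t) {m : ℤ} (hm : m ≠ 0) :
    t ^ m - t ^ (-m) ≠ 0 := by
  intro h
  refine ht (isOfFinOrder_iff_zpow_eq_one.mpr ⟨m + m, by lia, ?_⟩)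
  rw [zpow_add₀ ht₀]
  nth_rw 1 [sub_eq_zero.mp h]
  rw [← zpow_add₀ ht₀, neg_add_cancel, zpow_zero]

theorem sub_inv_ne_zero_of_not_isOfFinOrder (ht₀ : t ≠ 0) (ht : ¬IsOfFinOrder t) :
    t - t⁻¹ ≠ 0 := by
  simpa using zpow_sub_zpow_neg_ne_zero ht₀ ht one_ne_zero

theorem quantumInt_ne_zero (ht₀ : t ≠ 0) (ht : ¬IsOfFinOrder t) {m : ℤ} (hm : m ≠ 0) :
    quantumInt t m ≠ 0 :=
  div_ne_zero (zpow_sub_zpow_neg_ne_zero ht₀ ht hm) (sub_inv_ne_zero_of_not_isOfFinOrder ht₀ ht)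

theorem quantumInt_mul_add_quantumInt (ht₀ : t ≠ 0) (j M : ℤ) :
    quantumInt t j * quantumInt t (M - j + 1) + quantumInt t (M - 2 * j) =
      quantumInt t (j + 1) * quantumInt t (M - j) := by
  have hj : t ^ j ≠ 0 := zpow_ne_zero _ ht₀
  have hM : t ^ M ≠ 0 := zpow_ne_zero _ ht₀
  have hnum : (t ^ j - t ^ (-j)) * (t ^ (M - j + 1) - t ^ (-(M - j + 1))) +
      (t ^ (M - 2 * j) - t ^ (-(M - 2 * j))) * (t - t⁻¹) =
      (t ^ (j + 1) - t ^ (-(j + 1))) * (t ^ (M - j) - t ^ (-(M - j))) := by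
    simp only [two_mul, sub_eq_add_neg, neg_add_rev, neg_neg, zpow_add₀ ht₀, zpow_one, zpow_neg]
    field_simp
    ring
  rcases eq_or_ne (t - t⁻¹) 0 with h | h
  · simp only [quantumInt, h, div_zero, mul_zero, add_zero]
  · simp only [quantumInt]
    rw [div_mul_div_comm, div_mul_div_comm, ← hnum, add_div, mul_div_mul_right _ _ h]

end QuantumInt

section RootCone

variable {ι : Type*}

/-- The simple root `α_k = ∑ l, a l k ϖ_l` of a Cartan matrix `a`. Weights are written throughout in
the basis of fundamental weights `ϖ_l`, the latter being `Pi.single l 1`. -/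
def simpleRoot (a : ι → ι → ℤ) (k : ι) : ι → ℤ :=
  fun l => a l k

/-- The cone `Q⁺` of sums of simple roots of a Cartan matrix `a`; thus `μ ≤ ν` in the usual order on
weights means `ν - μ ∈ posRootCone a`. -/
def posRootCone (a : ι → ι → ℤ) : Submodule ℕ (ι → ℤ) :=
  Submodule.span ℕ (Set.range (simpleRoot a))

variable {a : ι → ι → ℤ}

theorem simpleRoot_mem_posRootCone (k : ι) : simpleRoot a k ∈ posRootCone a :=
  Submodule.subset_span ⟨k, rfl⟩

theorem mem_posRootCone {x : ι → ℤ} :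
    x ∈ posRootCone a ↔ ∃ m : ι →₀ ℕ, Finsupp.linearCombination ℕ (simpleRoot a) m = x :=
  Finsupp.mem_span_range_iff_exists_finsupp

theorem eq_zero_of_neg_mem_posRootCone (ha : LinearIndependent ℤ (simpleRoot a)) {x : ι → ℤ}
    (hx : x ∈ posRootCone a) (hx' : -x ∈ posRootCone a) : x = 0 := by
  obtain ⟨m, rfl⟩ := mem_posRootCone.mp hx
  obtain ⟨m', hm'⟩ := mem_posRootCone.mp hx'
  have hsum : m + m' = 0 := (ha.restrict_scalars' ℕ) (by
    rw [map_add, hm', add_neg_cancel, map_zero])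
  rw [(add_eq_zero.mp hsum).1, map_zero]

theorem eq_zero_or_eq_zero_of_add_eq_simpleRoot
    (ha : LinearIndependent ℤ (simpleRoot a)) {x y : ι → ℤ} (hx : x ∈ posRootCone a)
    (hy : y ∈ posRootCone a) {k : ι} (h : x + y = simpleRoot a k) : x = 0 ∨ y = 0 := by
  obtain ⟨m, rfl⟩ := mem_posRootCone.mp hx
  obtain ⟨m', rfl⟩ := mem_posRootCone.mp hy
  have hsum : m + m' = Finsupp.single k 1 := (ha.restrict_scalars' ℕ) (by
    rw [map_add, h, Finsupp.linearCombination_single, one_smul])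
  have hdegree : m.degree + m'.degree = 1 := by
    rw [← map_add, hsum, Finsupp.degree_single]
  have hdegree_zero : m.degree = 0 ∨ m'.degree = 0 := by lia
  refine hdegree_zero.imp ?_ ?_ <;>
  · intro h₀
    rw [(Finsupp.degree_eq_zero_iff _).mp h₀, map_zero]

end RootCone

section StableClosure

variable {R M ι : Type*} [Semiring R] [AddCommMonoid M] [Module R M]

/-- The smallest submodule containing `N` and stable under all the endomorphisms `f i`. For `f`
given by the generators of `U_q^±(𝔤)` this is the submodule `U_q^±(𝔤) · N`. -/
def stableClosure (f : ι → Module.End R M) (N : Submodule R M) : Submodule R M :=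
  sInf {P | N ≤ P ∧ ∀ i, P ∈ (f i).invtSubmodule}

variable {f : ι → Module.End R M} {N P : Submodule R M}

theorem le_stableClosure : N ≤ stableClosure f N :=
  le_sInf fun _ hP => hP.1

theorem stableClosure_le (hN : N ≤ P) (hf : ∀ i, P ∈ (f i).invtSubmodule) :
    stableClosure f N ≤ P :=
  sInf_le ⟨hN, hf⟩

theorem stableClosure_mem_invtSubmodule (i : ι) : stableClosure f N ∈ (f i).invtSubmodule := by
  rw [Module.End.mem_invtSubmodule_iff_forall_mem_of_mem]
  intro x hx
  rw [stableClosure, Submodule.mem_sInf] at hx ⊢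
  exact fun P hP => hP.2 i (hx P hP)

theorem apply_mem_stableClosure (i : ι) {x : M} (hx : x ∈ stableClosure f N) :
    f i x ∈ stableClosure f N :=
  stableClosure_mem_invtSubmodule i hx

theorem stableClosure_mono (h : N ≤ P) : stableClosure f N ≤ stableClosure f P :=
  stableClosure_le (h.trans le_stableClosure) stableClosure_mem_invtSubmodule

end StableClosure

theorem dualAnnihilator_eq_span_singleton {𝕜 V : Type*} [Field 𝕜] [AddCommGroup V] [Module 𝕜 V]
    {N : Submodule 𝕜 V} {v : V} (hN : Submodule.span 𝕜 {v} ⊔ N = ⊤) {ξ : Module.Dual 𝕜 V}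
    (hξ : ξ ∈ N.dualAnnihilator) (hξ₀ : ξ ≠ 0) : N.dualAnnihilator = Submodule.span 𝕜 {ξ} := by
  have ext_of_apply_eq : ∀ η ∈ N.dualAnnihilator, ∀ η' ∈ N.dualAnnihilator,
      η v = η' v → η = η' := by
    intro η hη η' hη' hv
    have hle : Submodule.span 𝕜 {v} ⊔ N ≤ LinearMap.eqLocus η η' := by
      refine sup_le ((Submodule.span_singleton_le_iff_mem _ _).mpr hv) fun x hx => ?_
      exact ((Submodule.mem_dualAnnihilator η).mp hη x hx).trans
        ((Submodule.mem_dualAnnihilator η').mp hη' x hx).symm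
    exact LinearMap.ext fun x => hle (hN ▸ Submodule.mem_top)
  have hξv : ξ v ≠ 0 := fun h => hξ₀ (ext_of_apply_eq ξ hξ 0 (Submodule.zero_mem _) h)
  refine le_antisymm (fun η hη => Submodule.mem_span_singleton.mpr ⟨η v / ξ v, ?_⟩)
    ((Submodule.span_singleton_le_iff_mem _ _).mpr hξ)
  refine ext_of_apply_eq _ (Submodule.smul_mem _ _ hξ) η hη ?_
  rw [LinearMap.smul_apply, smul_eq_mul, div_mul_cancel₀ _ hξv]

theorem mem_invtSubmodule_of_smul_on {𝕜 M J : Type*} [CommSemiring 𝕜] [AddCommMonoid M] [Module 𝕜 M]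
    {T : J → Submodule 𝕜 M} {N : Submodule 𝕜 M} (hN : N ≤ ⨆ j, N ⊓ T j) {f : Module.End 𝕜 M}
    {c : J → 𝕜} (hf : ∀ j, ∀ x ∈ T j, f x = c j • x) : N ∈ f.invtSubmodule := by
  refine (Module.End.mem_invtSubmodule _).mpr (hN.trans (iSup_le fun j x hx => ?_))
  rw [Submodule.mem_comap, hf j x hx.2]
  exact N.smul_mem _ hx.1

theorem adjoin_apply_mem {𝕜 U M : Type*} [CommRing 𝕜] [Ring U] [Algebra 𝕜 U] [AddCommGroup M]
    [Module 𝕜 M] {ρ : U →ₐ[𝕜] Module.End 𝕜 M} {S : Set U} {N : Submodule 𝕜 M}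
    (hS : ∀ g ∈ S, N ∈ (ρ g).invtSubmodule) {y : U} (hy : y ∈ Algebra.adjoin 𝕜 S) {x : M}
    (hx : x ∈ N) : ρ y x ∈ N := by
  induction hy using Algebra.adjoin_induction generalizing x with
  | mem g hg => exact hS g hg hx
  | algebraMap c =>
    rw [AlgHom.commutes, Module.algebraMap_end_apply]
    exact N.smul_mem c hx
  | add y z _ _ hy hz =>
    rw [map_add]
    exact N.add_mem (hy hx) (hz hx)
  | mul y z _ _ hy hz =>
    rw [map_mul]
    exact hy (hz hx)

section WeightRep

variable {𝕜 ι V : Type*} [Field 𝕜] [DecidableEq ι] [AddCommGroup V] [Module 𝕜 V]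

/-- The part of the structure of a `U_q(𝔤)`-module that the argument uses: raising operators `X k`
and lowering operators `Y k` (the actions of `E_k` and `F_k`), which shift the independent weight
spaces `T μ` by `±α_k` and satisfy `[X i, Y j] = δ_{ij} [μ i]` on `T μ`, the quantum integer being
taken at `r i = q_i`. The `K_i` are encoded by the grading `T`, which need not exhaust `V`. -/
structure IsWeightRep (r : ι → 𝕜) (a : ι → ι → ℤ) (X Y : ι → Module.End 𝕜 V)
    (T : (ι → ℤ) → Submodule 𝕜 V) : Prop where
  raise_mem : ∀ (k : ι) {μ : ι → ℤ} {x : V}, x ∈ T μ → X k x ∈ T (μ + simpleRoot a k)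
  lower_mem : ∀ (k : ι) {μ : ι → ℤ} {x : V}, x ∈ T μ → Y k x ∈ T (μ - simpleRoot a k)
  commutator : ∀ (i j : ι) {μ : ι → ℤ} {x : V}, x ∈ T μ →
    X i (Y j x) - Y j (X i x) = if i = j then quantumInt (r i) (μ i) • x else 0
  independent : iSupIndep T

namespace IsWeightRep

variable {r : ι → 𝕜} {a : ι → ι → ℤ} {X Y : ι → Module.End 𝕜 V} {T : (ι → ℤ) → Submodule 𝕜 V}

theorem dual (R : IsWeightRep r a X Y T) : IsWeightRep r a Y X fun μ => T (-μ) where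
  raise_mem k μ x hx := by
    rw [neg_add, ← sub_eq_add_neg]
    exact R.lower_mem k hx
  lower_mem k μ x hx := by
    rw [neg_sub', sub_neg_eq_add]
    exact R.raise_mem k hx
  commutator i j μ x hx := by
    rw [← neg_sub, R.commutator j i hx]
    rcases eq_or_ne i j with rfl | h
    · rw [if_pos rfl, if_pos rfl, Pi.neg_apply, quantumInt_neg, neg_smul, neg_neg]
    · rw [if_neg h, if_neg h.symm, neg_zero]
  independent := R.independent.comp neg_injective

theorem lower_pow_mem (R : IsWeightRep r a X Y T) (k : ι) {μ : ι → ℤ} {x : V} (hx : x ∈ T μ)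
    (t : ℕ) : (Y k ^ t) x ∈ T (μ - t • simpleRoot a k) := by
  induction t with
  | zero => simpa using hx
  | succ t ih =>
    rw [pow_succ', succ_nsmul, ← sub_sub]
    exact R.lower_mem k ih

theorem raise_pow_mem (R : IsWeightRep r a X Y T) (k : ι) {μ : ι → ℤ} {x : V} (hx : x ∈ T μ)
    (t : ℕ) : (X k ^ t) x ∈ T (μ + t • simpleRoot a k) := by
  have := R.dual.lower_pow_mem k (μ := -μ) (by rwa [neg_neg]) t
  rwa [neg_sub, sub_neg_eq_add, add_comm] at this

theorem raise_lower_pow_succ (R : IsWeightRep r a X Y T) {k : ι} (hr₀ : r k ≠ 0)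
    (ha : a k k = 2) {μ : ι → ℤ} {y : V} (hy : y ∈ T μ) (hXy : X k y = 0) (t : ℕ) :
    X k ((Y k ^ (t + 1)) y) =
      (quantumInt (r k) (t + 1) * quantumInt (r k) (μ k - t)) • (Y k ^ t) y := by
  have hcomm : ∀ t : ℕ, X k ((Y k ^ (t + 1)) y) = Y k (X k ((Y k ^ t) y)) +
      quantumInt (r k) (μ k - 2 * t) • (Y k ^ t) y := by
    intro t
    have := R.commutator k k (R.lower_pow_mem k hy t)
    rw [if_pos rfl, sub_eq_iff_eq_add'] at this
    rw [pow_succ', Module.End.mul_apply, this, Pi.sub_apply, Pi.smul_apply, simpleRoot, ha,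
      nsmul_eq_mul, mul_comm]
  induction t with
  | zero =>
    have h := quantumInt_mul_add_quantumInt hr₀ 0 (μ k)
    simp only [quantumInt, zpow_zero, neg_zero, sub_self, zero_div, zero_mul] at h
    rw [hcomm, pow_zero, Module.End.one_apply, hXy, map_zero, zero_add]
    simp only [quantumInt, Nat.cast_zero, ← h]
    simp
  | succ t ih =>
    rw [hcomm, ih, map_smul, ← Module.End.mul_apply, ← pow_succ', ← add_smul]
    have := quantumInt_mul_add_quantumInt hr₀ (t + 1) (μ k)
    rw [show μ k - (t + 1) + 1 = μ k - t by ring] at this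
    push_cast
    rw [this]

theorem lower_pow_ne_zero (R : IsWeightRep r a X Y T) {k : ι} (hr₀ : r k ≠ 0)
    (hr : ¬IsOfFinOrder (r k)) (ha : a k k = 2) {μ : ι → ℤ} {y : V} (hy : y ∈ T μ)
    (hy₀ : y ≠ 0) (hXy : X k y = 0) {t : ℕ} (ht : t ≤ μ k) : (Y k ^ t) y ≠ 0 := by
  induction t with
  | zero => simpa using hy₀
  | succ t ih =>
    intro h
    have hX := R.raise_lower_pow_succ hr₀ ha hy hXy t
    rw [h, map_zero, eq_comm, smul_eq_zero, mul_eq_zero] at hX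
    push_cast at ht
    rcases hX with (h | h) | h
    · exact quantumInt_ne_zero hr₀ hr (by lia) h
    · exact quantumInt_ne_zero hr₀ hr (by lia) h
    · exact ih (by lia) h

theorem exists_raise_pow_ne_zero [FiniteDimensional 𝕜 V] (R : IsWeightRep r a X Y T) {k : ι}
    (ha : simpleRoot a k ≠ 0) {μ : ι → ℤ} {x : V} (hx : x ∈ T μ) (hx₀ : x ≠ 0) :
    ∃ t : ℕ, (X k ^ t) x ≠ 0 ∧ X k ((X k ^ t) x) = 0 := by
  by_contra! h
  have hne : ∀ t : ℕ, (X k ^ t) x ≠ 0 := by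
    intro t
    induction t with
    | zero => simpa using hx₀
    | succ t ih => rw [pow_succ', Module.End.mul_apply]; exact h t ih
  have hinj : Function.Injective fun t : ℕ => μ + (t : ℤ) • simpleRoot a k :=
    (add_right_injective μ).comp ((smul_left_injective ℤ ha).comp Nat.cast_injective)
  refine Set.infinite_of_injective_forall_mem hinj (s := {ν | T ν ≠ ⊥}) (fun t => ?_)
    (Submodule.finite_ne_bot_of_iSupIndep R.independent)
  rw [natCast_zsmul]
  exact (Submodule.ne_bot_iff _).mpr ⟨_, R.raise_pow_mem k hx t, hne t⟩

theorem reflection_ne_bot_of_nonneg [FiniteDimensional 𝕜 V] (R : IsWeightRep r a X Y T) {k : ι}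
    (hr₀ : r k ≠ 0) (hr : ¬IsOfFinOrder (r k)) (ha : a k k = 2) {μ : ι → ℤ} (hμ : T μ ≠ ⊥)
    (hk : 0 ≤ μ k) : T (μ - μ k • simpleRoot a k) ≠ ⊥ := by
  obtain ⟨x, hx, hx₀⟩ := Submodule.exists_mem_ne_zero_of_ne_bot hμ
  have hroot : simpleRoot a k ≠ 0 := fun h => by
    have := congrFun h k
    rw [simpleRoot, ha, Pi.zero_apply] at this
    lia
  obtain ⟨t, htop, hX⟩ := R.exists_raise_pow_ne_zero hroot hx hx₀
  obtain ⟨m, hm⟩ := Int.eq_ofNat_of_zero_le hk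
  have hy := R.raise_pow_mem k hx t
  refine (Submodule.ne_bot_iff _).mpr ⟨(Y k ^ (m + t)) ((X k ^ t) x), ?_, ?_⟩
  · have hlow := R.lower_pow_mem k hy (m + t)
    rwa [add_smul, add_sub_add_right_eq_sub, ← natCast_zsmul, ← hm] at hlow
  · refine R.lower_pow_ne_zero hr₀ hr ha hy htop hX ?_
    rw [Pi.add_apply, Pi.smul_apply, simpleRoot, ha, hm, nsmul_eq_mul]
    push_cast
    lia

theorem reflection_ne_bot [FiniteDimensional 𝕜 V] (R : IsWeightRep r a X Y T) {k : ι}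
    (hr₀ : r k ≠ 0) (hr : ¬IsOfFinOrder (r k)) (ha : a k k = 2) {μ : ι → ℤ} (hμ : T μ ≠ ⊥) :
    T (μ - μ k • simpleRoot a k) ≠ ⊥ := by
  rcases le_total 0 (μ k) with h | h
  · exact R.reflection_ne_bot_of_nonneg hr₀ hr ha hμ h
  · have := R.dual.reflection_ne_bot_of_nonneg hr₀ hr ha (k := k) (μ := -μ) (by rwa [neg_neg])
      (by simpa using h)
    rwa [Pi.neg_apply, neg_smul, sub_neg_eq_add, neg_add, neg_neg, ← sub_eq_add_neg] at this

theorem stableClosure_le_iSup_inf (R : IsWeightRep r a X Y T) {N P : Submodule 𝕜 V} {μ : ι → ℤ}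
    (hN : N ≤ T μ) (hP : N ≤ P)
    (hstep : ∀ (k : ι) {ν : ι → ℤ} {y : V}, y ∈ T ν → y ∈ P → Y k y ∈ P) :
    stableClosure Y N ≤ ⨆ x : posRootCone a, P ⊓ T (μ - x) := by
  refine stableClosure_le (fun y hy => ?_) fun k => (Module.End.mem_invtSubmodule _).mpr ?_
  · refine Submodule.mem_iSup_of_mem 0 ⟨hP hy, ?_⟩
    rw [ZeroMemClass.coe_zero, sub_zero]
    exact hN hy
  · refine iSup_le fun x y hy => ?_
    refine Submodule.mem_iSup_of_mem (x + ⟨_, simpleRoot_mem_posRootCone k⟩)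
      ⟨hstep k hy.2 hy.1, ?_⟩
    rw [Submodule.coe_add, ← sub_sub]
    exact R.lower_mem k hy.2

theorem stableClosure_le_biSup (R : IsWeightRep r a X Y T) (μ : ι → ℤ) :
    stableClosure Y (T μ) ≤ ⨆ ν ∈ {ν | μ - ν ∈ posRootCone a}, T ν := by
  refine (R.stableClosure_le_iSup_inf le_rfl le_top fun _ _ _ _ _ => Submodule.mem_top).trans
    (iSup_le fun x => inf_le_right.trans (le_biSup T ?_))
  change μ - (μ - x) ∈ posRootCone a
  rw [sub_sub_cancel]
  exact x.2

theorem mem_of_biSup_eq_top (R : IsWeightRep r a X Y T) {s : Set (ι → ℤ)}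
    (hs : ⨆ μ ∈ s, T μ = ⊤) {μ : ι → ℤ} (hμ : T μ ≠ ⊥) : μ ∈ s :=
  by_contra fun h => hμ (disjoint_top.mp (hs ▸ R.independent.disjoint_biSup h))

end IsWeightRep

/-- A simple graded module, in the encoding of `IsWeightRep`, with a highest weight vector of weight
`lam`. Simplicity is only required for graded submodules, the `K_i` not being part of the data. -/
structure IsSimpleHighestWeightRep (r : ι → 𝕜) (a : ι → ι → ℤ) (X Y : ι → Module.End 𝕜 V)
    (T : (ι → ℤ) → Submodule 𝕜 V) (lam : ι → ℤ) : Prop extends IsWeightRep r a X Y T where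
  eq_bot_or_eq_top : ∀ N : Submodule 𝕜 V, N ≤ ⨆ μ, N ⊓ T μ →
    (∀ k, N ∈ (X k).invtSubmodule) → (∀ k, N ∈ (Y k).invtSubmodule) → N = ⊥ ∨ N = ⊤
  exists_highest : ∃ v ∈ T lam, v ≠ 0 ∧ ∀ k, X k v = 0

namespace IsSimpleHighestWeightRep

variable {r : ι → 𝕜} {a : ι → ι → ℤ} {X Y : ι → Module.End 𝕜 V} {T : (ι → ℤ) → Submodule 𝕜 V}
  {lam : ι → ℤ}

theorem ne_bot (R : IsSimpleHighestWeightRep r a X Y T lam) : T lam ≠ ⊥ := by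
  obtain ⟨v, hv, hv₀, -⟩ := R.exists_highest
  exact (Submodule.ne_bot_iff _).mpr ⟨v, hv, hv₀⟩

theorem stableClosure_span_eq_top (R : IsSimpleHighestWeightRep r a X Y T lam) {v : V}
    (hv : v ∈ T lam) (hv₀ : v ≠ 0) (hXv : ∀ k, X k v = 0) :
    stableClosure Y (Submodule.span 𝕜 {v}) = ⊤ := by
  set N := stableClosure Y (Submodule.span 𝕜 {v})
  have hvN : v ∈ N := le_stableClosure (Submodule.mem_span_singleton_self v)
  have hsub : N ≤ ⨆ x : posRootCone a, (N ⊓ ⨅ i, N.comap (X i)) ⊓ T (lam - x) := by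
    refine R.stableClosure_le_iSup_inf ((Submodule.span_singleton_le_iff_mem _ _).mpr hv)
      ((Submodule.span_singleton_le_iff_mem _ _).mpr ⟨hvN, ?_⟩) ?_
    · refine (Submodule.mem_iInf _).mpr fun i => ?_
      rw [Submodule.mem_comap, hXv]
      exact N.zero_mem
    · rintro k μ y hyT ⟨hyN, hXy⟩
      refine ⟨apply_mem_stableClosure k hyN, (Submodule.mem_iInf _).mpr fun i => ?_⟩
      rw [Submodule.mem_comap, ← sub_add_cancel (X i (Y k y)) (Y k (X i y)),
        R.commutator i k hyT]
      refine N.add_mem ?_ (apply_mem_stableClosure k ((Submodule.mem_iInf _).mp hXy i))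
      split_ifs
      exacts [N.smul_mem _ hyN, N.zero_mem]
  refine (R.eq_bot_or_eq_top N ?_ (fun i => ?_) stableClosure_mem_invtSubmodule).resolve_left
    ((Submodule.ne_bot_iff N).mpr ⟨v, hvN, hv₀⟩)
  · exact hsub.trans (iSup_le fun x =>
      le_iSup_of_le (lam - x) (inf_le_inf_right _ inf_le_left))
  · exact hsub.trans (iSup_le fun x =>
      inf_le_left.trans (inf_le_right.trans (iInf_le _ i)))

theorem stableClosure_eq_top (R : IsSimpleHighestWeightRep r a X Y T lam) :
    stableClosure Y (T lam) = ⊤ := by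
  obtain ⟨v, hv, hv₀, hXv⟩ := R.exists_highest
  rw [eq_top_iff, ← R.stableClosure_span_eq_top hv hv₀ hXv]
  exact stableClosure_mono ((Submodule.span_singleton_le_iff_mem _ _).mpr hv)

theorem sub_mem_posRootCone (R : IsSimpleHighestWeightRep r a X Y T lam) {μ : ι → ℤ}
    (hμ : T μ ≠ ⊥) : lam - μ ∈ posRootCone a :=
  R.mem_of_biSup_eq_top
    (top_le_iff.mp (R.stableClosure_eq_top.symm.le.trans (R.stableClosure_le_biSup lam))) hμ

theorem eq_span_singleton (R : IsSimpleHighestWeightRep r a X Y T lam)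
    (ha : LinearIndependent ℤ (simpleRoot a)) {v : V} (hv : v ∈ T lam) (hv₀ : v ≠ 0) :
    T lam = Submodule.span 𝕜 {v} := by
  set Q := ⨆ ν ∈ {ν | lam - ν ∈ posRootCone a ∧ ν ≠ lam}, T ν
  have hlower : ∀ (k : ι) {ν : ι → ℤ} {y : V}, lam - ν ∈ posRootCone a → y ∈ T ν → Y k y ∈ Q := by
    intro k ν y hν hy
    have hmem : ν - simpleRoot a k ∈ {ν | lam - ν ∈ posRootCone a ∧ ν ≠ lam} := by
      refine ⟨?_, fun h => ?_⟩
      · rw [sub_sub_eq_add_sub, add_sub_right_comm]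
        exact add_mem hν (simpleRoot_mem_posRootCone k)
      · rw [← h, sub_sub_cancel_left] at hν
        exact ha.ne_zero k (eq_zero_of_neg_mem_posRootCone ha (simpleRoot_mem_posRootCone k) hν)
    exact le_biSup T hmem (R.lower_mem k hy)
  have hXv : ∀ k, X k v = 0 := fun k => by
    by_contra h
    have := R.sub_mem_posRootCone ((Submodule.ne_bot_iff _).mpr ⟨_, R.raise_mem k hv, h⟩)
    rw [sub_add_cancel_left] at this
    exact ha.ne_zero k (eq_zero_of_neg_mem_posRootCone ha (simpleRoot_mem_posRootCone k) this)
  have hspan : Submodule.span 𝕜 {v} ≤ T lam := (Submodule.span_singleton_le_iff_mem _ _).mpr hv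
  have htop : Submodule.span 𝕜 {v} ⊔ Q = ⊤ := by
    rw [eq_top_iff, ← R.stableClosure_span_eq_top hv hv₀ hXv]
    refine stableClosure_le le_sup_left fun k => (Module.End.mem_invtSubmodule _).mpr (sup_le ?_ ?_)
    · refine (Submodule.span_singleton_le_iff_mem _ _).mpr (Submodule.mem_sup_right ?_)
      exact hlower k (by rw [sub_self]; exact zero_mem _) hv
    · exact iSup₂_le fun ν hν y hy => Submodule.mem_sup_right (hlower k hν.1 hy)
  have hdisj : Disjoint (T lam) Q := R.independent.disjoint_biSup fun h => h.2 rfl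
  rw [← top_inf_eq (T lam), ← htop, sup_inf_assoc_of_le Q hspan, hdisj.symm.eq_bot, sup_bot_eq]

theorem dual (R : IsSimpleHighestWeightRep r a X Y T lam) {μ : ι → ℤ} (hμ : T μ ≠ ⊥)
    (hlow : ∀ k, ∀ u ∈ T μ, Y k u = 0) :
    IsSimpleHighestWeightRep r a Y X (fun ν => T (-ν)) (-μ) where
  toIsWeightRep := R.toIsWeightRep.dual
  eq_bot_or_eq_top N hN hY hX :=
    R.eq_bot_or_eq_top N (hN.trans (iSup_le fun ν => le_iSup (fun ν => N ⊓ T ν) (-ν))) hX hY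
  exists_highest := by
    obtain ⟨u, hu, hu₀⟩ := Submodule.exists_mem_ne_zero_of_ne_bot hμ
    exact ⟨u, by rwa [neg_neg], hu₀, fun k => hlow k u hu⟩

section SubordinateWeight

variable {ν : ι → ℤ}

theorem span_sup_stableClosure_eq_top (R : IsSimpleHighestWeightRep r a X Y T lam)
    (hν : ∀ k, T (lam - simpleRoot a k) = ⊥ ∨ lam - simpleRoot a k = ν) {v : V} (hv : v ∈ T lam)
    (hv₀ : v ≠ 0) (hXv : ∀ k, X k v = 0) :
    Submodule.span 𝕜 {v} ⊔ stableClosure Y (T ν) = ⊤ := by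
  rw [eq_top_iff, ← R.stableClosure_span_eq_top hv hv₀ hXv]
  refine stableClosure_le le_sup_left fun k => (Module.End.mem_invtSubmodule _).mpr (sup_le ?_ ?_)
  · have hYv := R.lower_mem k hv
    rw [Submodule.span_singleton_le_iff_mem, Submodule.mem_comap]
    rcases hν k with h | h <;> rw [h] at hYv
    · rw [(Submodule.mem_bot 𝕜).mp hYv]
      exact Submodule.zero_mem _
    · exact Submodule.mem_sup_right (le_stableClosure hYv)
  · exact fun y hy => Submodule.mem_sup_right (apply_mem_stableClosure k hy)

theorem eq_or_sub_mem_posRootCone (R : IsSimpleHighestWeightRep r a X Y T lam)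
    (hν : ∀ k, T (lam - simpleRoot a k) = ⊥ ∨ lam - simpleRoot a k = ν) {μ : ι → ℤ}
    (hμ : T μ ≠ ⊥) : μ = lam ∨ ν - μ ∈ posRootCone a := by
  obtain ⟨v, hv, hv₀, hXv⟩ := R.exists_highest
  refine R.mem_of_biSup_eq_top (s := {μ | μ = lam ∨ ν - μ ∈ posRootCone a}) (top_le_iff.mp ?_) hμ
  rw [← R.span_sup_stableClosure_eq_top hν hv hv₀ hXv]
  refine sup_le ?_ ((R.stableClosure_le_biSup ν).trans (biSup_mono fun μ => Or.inr))
  exact (Submodule.span_singleton_le_iff_mem _ _).mpr (le_biSup T (Or.inl rfl) hv)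

theorem dualAnnihilator_stableClosure (R : IsSimpleHighestWeightRep r a X Y T lam)
    (ha : LinearIndependent ℤ (simpleRoot a)) (hlt : lam - ν ∈ posRootCone a) (hne : ν ≠ lam)
    (hν : ∀ k, T (lam - simpleRoot a k) = ⊥ ∨ lam - simpleRoot a k = ν) {ξ : Module.Dual 𝕜 V}
    (hξ : ∀ μ, μ ≠ lam → ∀ x ∈ T μ, ξ x = 0) (hξ₀ : ξ ≠ 0) :
    (stableClosure Y (T ν)).dualAnnihilator = Submodule.span 𝕜 {ξ} := by
  obtain ⟨v, hv, hv₀, hXv⟩ := R.exists_highest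
  refine dualAnnihilator_eq_span_singleton (R.span_sup_stableClosure_eq_top hν hv hv₀ hXv) ?_ hξ₀
  have hker : stableClosure Y (T ν) ≤ LinearMap.ker ξ := by
    refine (R.stableClosure_le_biSup ν).trans (iSup₂_le fun μ hμ => hξ μ ?_)
    rintro rfl
    rw [← neg_sub] at hlt
    exact hne (sub_eq_zero.mp (eq_zero_of_neg_mem_posRootCone ha hμ hlt))
  exact (Submodule.mem_dualAnnihilator ξ).mpr fun y hy => hker hy

end SubordinateWeight

end IsSimpleHighestWeightRep

end WeightRep

section WeylAction

variable {ι W : Type*} [Group W] [DistribMulAction W (ι → ℤ)]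

/-- The group `W` acts on weights as (a group mapping onto) the Weyl group of `a`: it is generated
by elements `s i` acting as the simple reflections. -/
structure IsWeylAction (a : ι → ι → ℤ) (s : ι → W) : Prop where
  diag : ∀ i, a i i = 2
  closure_eq_top : Subgroup.closure (Set.range s) = ⊤
  simple_smul : ∀ i (μ : ι → ℤ), s i • μ = μ - μ i • simpleRoot a i

namespace IsWeylAction

variable {a : ι → ι → ℤ} {s : ι → W}

theorem simple_smul_simpleRoot (S : IsWeylAction a s) (i : ι) :
    s i • simpleRoot a i = -simpleRoot a i := by
  rw [S.simple_smul, simpleRoot, S.diag, two_smul, sub_add_cancel_left]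

theorem simpleRoot_ne_zero (S : IsWeylAction a s) (i : ι) : simpleRoot a i ≠ 0 := fun h => by
  have := congrFun h i
  rw [simpleRoot, S.diag, Pi.zero_apply] at this
  lia

theorem simple_smul_simple_smul (S : IsWeylAction a s) (i : ι) (μ : ι → ℤ) :
    s i • s i • μ = μ := by
  rw [S.simple_smul i μ, smul_sub, S.simple_smul i μ, smul_comm, S.simple_smul_simpleRoot,
    smul_neg, sub_neg_eq_add, sub_add_cancel]

theorem simple_smul_single_of_ne [DecidableEq ι] (S : IsWeylAction a s) {i j : ι} (h : j ≠ i) :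
    s i • (Pi.single j 1 : ι → ℤ) = Pi.single j 1 := by
  rw [S.simple_smul, Pi.single_eq_of_ne h.symm, zero_smul, sub_zero]

theorem smul_induction (S : IsWeylAction a s) {p : (ι → ℤ) → Prop}
    (hp : ∀ i μ, p μ → p (s i • μ)) (w : W) {μ : ι → ℤ} (hμ : p μ) : p (w • μ) := by
  have hw : w ∈ Subgroup.closure (Set.range s) := S.closure_eq_top ▸ Subgroup.mem_top w
  induction hw using Subgroup.closure_induction_left with
  | one => rwa [one_smul]
  | mul_left _ hx y _ ih =>
    obtain ⟨i, rfl⟩ := hx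
    rw [mul_smul]
    exact hp i _ ih
  | inv_mul_cancel _ hx y _ ih =>
    obtain ⟨i, rfl⟩ := hx
    rw [mul_smul, inv_smul_eq_iff.mpr (S.simple_smul_simple_smul i _).symm]
    exact hp i _ ih

theorem eq_zero_of_forall_smul_eq (S : IsWeylAction a s) {μ : ι → ℤ} (hμ : ∀ w : W, w • μ = μ) :
    μ = 0 := by
  funext i
  have := congrFun (hμ (s i)) i
  rw [S.simple_smul, Pi.sub_apply, Pi.smul_apply, simpleRoot, S.diag, smul_eq_mul] at this
  rw [Pi.zero_apply]
  lia

theorem eq_zero_of_apply_simpleRoot_eq_zero [Finite W] (S : IsWeylAction a s)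
    {f : (ι → ℤ) →+ ℤ} (hf : ∀ i, f (simpleRoot a i) = 0) : f = 0 := by
  have := Fintype.ofFinite W
  ext1 μ
  have hinv : ∀ w : W, f (w • μ) = f μ := fun w =>
    S.smul_induction (p := fun ν => f ν = f μ) (fun i ν hν => by
      rw [S.simple_smul, map_sub, map_zsmul, hf, smul_zero, sub_zero, hν]) w rfl
  have hsum : ∑ w : W, w • μ = 0 := S.eq_zero_of_forall_smul_eq fun w => by
    rw [Finset.smul_sum]
    simp only [smul_smul]
    exact Equiv.sum_comp (Equiv.mulLeft w) fun w' => w' • μ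
  have hcard : Fintype.card W • f μ = 0 := by
    rw [← map_zero f, ← hsum, map_sum]
    simp only [hinv, Finset.sum_const, Finset.card_univ]
  exact (smul_eq_zero.mp hcard).resolve_left Fintype.card_ne_zero

-- A relation among the `α_j` is, through the symmetrised form, a functional killing every root.
theorem linearIndependent_simpleRoot [Finite W] (S : IsWeylAction a s) {d : ι → ℤ}
    (hd : ∀ i, d i ≠ 0) (hsymm : ∀ i j, d i * a i j = d j * a j i) :
    LinearIndependent ℤ (simpleRoot a) := by
  classical
  refine linearIndependent_iff'.mpr fun t z hz l hlt => ?_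
  let f : (ι → ℤ) →ₗ[ℤ] ℤ := ∑ j ∈ t, (d j * z j) • LinearMap.proj j
  have hf_apply : ∀ μ, f μ = ∑ j ∈ t, d j * z j * μ j := fun μ => by
    simp only [f, LinearMap.sum_apply, LinearMap.smul_apply, LinearMap.proj_apply, smul_eq_mul]
  have hf : f.toAddMonoidHom = 0 := S.eq_zero_of_apply_simpleRoot_eq_zero fun i => by
    calc f (simpleRoot a i) = ∑ j ∈ t, d j * z j * a j i := hf_apply _
      _ = d i * (∑ j ∈ t, z j • simpleRoot a j) i := by
        rw [Finset.sum_apply, Finset.mul_sum]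
        refine Finset.sum_congr rfl fun j _ => ?_
        rw [Pi.smul_apply, smul_eq_mul, simpleRoot, mul_left_comm, hsymm i j]
        ring
      _ = 0 := by rw [hz, Pi.zero_apply, mul_zero]
  have hl : f (Pi.single l 1) = 0 := DFunLike.congr_fun hf (Pi.single l 1)
  rw [hf_apply, Finset.sum_eq_single l (fun j _ hj => by rw [Pi.single_eq_of_ne hj, mul_zero])
    (fun h => absurd hlt h), Pi.single_eq_same, mul_one] at hl
  exact (mul_eq_zero.mp hl).resolve_left (hd l)

end IsWeylAction

/-- A Weyl group action together with its longest element `w₀`, characterised by exchanging dominant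
and antidominant weights. The last two fields record the two facts of the theory of root systems
that are needed: independence of simple roots, and maximality of a dominant weight in its orbit. -/
structure IsLongestElement (a : ι → ι → ℤ) (s : ι → W) (w₀ : W) : Prop extends
    IsWeylAction a s where
  smul_nonpos : ∀ {μ : ι → ℤ}, 0 ≤ μ → w₀ • μ ≤ 0
  linearIndependent : LinearIndependent ℤ (simpleRoot a)
  sub_smul_mem : ∀ {μ : ι → ℤ}, 0 ≤ μ → ∀ w : W, μ - w • μ ∈ posRootCone a

namespace IsLongestElement

variable {a : ι → ι → ℤ} {s : ι → W} {w₀ : W}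

theorem smul_eq_of_nonneg (L : IsLongestElement a s w₀) {w : W} {μ : ι → ℤ} (hμ : 0 ≤ μ)
    (hw : 0 ≤ w • μ) : w • μ = μ := by
  refine (sub_eq_zero.mp
    (eq_zero_of_neg_mem_posRootCone L.linearIndependent (L.sub_smul_mem hμ w) ?_)).symm
  have := L.sub_smul_mem hw w⁻¹
  rwa [inv_smul_smul, ← neg_sub] at this

theorem smul_smul_self (L : IsLongestElement a s w₀) (μ : ι → ℤ) : w₀ • w₀ • μ = μ := by
  have hdom : ∀ μ : ι → ℤ, 0 ≤ μ → w₀ • w₀ • μ = μ := by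
    intro μ hμ
    have hμ' : 0 ≤ w₀ • w₀ • μ := by
      have := L.smul_nonpos (neg_nonneg.mpr (L.smul_nonpos hμ))
      rwa [smul_neg, neg_nonpos] at this
    rw [← mul_smul] at hμ' ⊢
    exact L.smul_eq_of_nonneg hμ hμ'
  rw [← posPart_sub_negPart μ, smul_sub, smul_sub, hdom _ (posPart_nonneg μ),
    hdom _ (negPart_nonneg μ)]

theorem neg_smul_mem_posRootCone (L : IsLongestElement a s w₀) {x : ι → ℤ}
    (hx : x ∈ posRootCone a) : -(w₀ • x) ∈ posRootCone a := by
  classical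
  induction hx using Submodule.span_induction with
  | zero => rw [smul_zero, neg_zero]; exact Submodule.zero_mem _
  | add x y _ _ hx hy => rw [smul_add, neg_add]; exact Submodule.add_mem _ hx hy
  | smul t x _ hx => rw [smul_comm, ← smul_neg]; exact Submodule.smul_mem _ t hx
  | mem x hx =>
    obtain ⟨k, rfl⟩ := hx
    have hϖ : (0 : ι → ℤ) ≤ Pi.single k 1 := Pi.single_nonneg.mpr zero_le_one
    have hroot : simpleRoot a k = Pi.single k 1 - s k • (Pi.single k 1 : ι → ℤ) := by
      rw [L.simple_smul, Pi.single_eq_same, one_smul, sub_sub_cancel]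
    have := L.sub_smul_mem (neg_nonneg.mpr (L.smul_nonpos hϖ)) (w₀ * s k * w₀)
    rwa [smul_neg, mul_smul, mul_smul, L.smul_smul_self, ← neg_sub', ← smul_sub, ← hroot] at this

theorem smul_simpleRoot_ne_zero (L : IsLongestElement a s w₀) (k : ι) :
    w₀ • simpleRoot a k ≠ 0 := fun h =>
  L.simpleRoot_ne_zero k (by rw [← L.smul_smul_self (simpleRoot a k), h, smul_zero])

end IsLongestElement

end WeylAction

section ExtremalWeights

variable {𝕜 ι V W : Type*} [Field 𝕜] [DecidableEq ι] [AddCommGroup V] [Module 𝕜 V]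
  [FiniteDimensional 𝕜 V] [Group W] [DistribMulAction W (ι → ℤ)] {r : ι → 𝕜} {a : ι → ι → ℤ}
  {X Y : ι → Module.End 𝕜 V} {T : (ι → ℤ) → Submodule 𝕜 V} {s : ι → W} {w₀ : W}

theorem IsWeightRep.smul_ne_bot (R : IsWeightRep r a X Y T) (S : IsWeylAction a s)
    (hr₀ : ∀ i, r i ≠ 0) (hr : ∀ i, ¬IsOfFinOrder (r i)) (w : W) {μ : ι → ℤ} (hμ : T μ ≠ ⊥) :
    T (w • μ) ≠ ⊥ :=
  S.smul_induction (p := fun ν => T ν ≠ ⊥) (fun i ν hν => by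
    rw [S.simple_smul]
    exact R.reflection_ne_bot (hr₀ i) (hr i) (S.diag i) hν) w hμ

namespace IsSimpleHighestWeightRep

variable {lam : ι → ℤ}

theorem sub_smul_mem_posRootCone (R : IsSimpleHighestWeightRep r a X Y T lam)
    (S : IsWeylAction a s) (hr₀ : ∀ i, r i ≠ 0) (hr : ∀ i, ¬IsOfFinOrder (r i)) (w : W) :
    lam - w • lam ∈ posRootCone a :=
  R.sub_mem_posRootCone (R.smul_ne_bot S hr₀ hr w R.ne_bot)

theorem lower_eq_zero_of_mem_longest (R : IsSimpleHighestWeightRep r a X Y T lam)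
    (L : IsLongestElement a s w₀) (hr₀ : ∀ i, r i ≠ 0) (hr : ∀ i, ¬IsOfFinOrder (r i))
    (k : ι) {u : V} (hu : u ∈ T (w₀ • lam)) : Y k u = 0 := by
  have hbot : T (w₀ • lam - simpleRoot a k) = ⊥ := by
    by_contra hne
    have hmem := R.sub_mem_posRootCone (R.smul_ne_bot L.toIsWeylAction hr₀ hr w₀ hne)
    rw [smul_sub, L.smul_smul_self, sub_sub_cancel] at hmem
    exact L.smul_simpleRoot_ne_zero k (eq_zero_of_neg_mem_posRootCone L.linearIndependent hmem
      (L.neg_smul_mem_posRootCone (simpleRoot_mem_posRootCone k)))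
  exact (Submodule.mem_bot 𝕜).mp (hbot ▸ R.lower_mem k hu)

theorem longest_dual (R : IsSimpleHighestWeightRep r a X Y T lam) (L : IsLongestElement a s w₀)
    (hr₀ : ∀ i, r i ≠ 0) (hr : ∀ i, ¬IsOfFinOrder (r i)) :
    IsSimpleHighestWeightRep r a Y X (fun ν => T (-ν)) (-(w₀ • lam)) :=
  R.dual (R.smul_ne_bot L.toIsWeylAction hr₀ hr w₀ R.ne_bot)
    fun k _ hu => R.lower_eq_zero_of_mem_longest L hr₀ hr k hu

theorem longest_eq_span_singleton (R : IsSimpleHighestWeightRep r a X Y T lam)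
    (L : IsLongestElement a s w₀) (hr₀ : ∀ i, r i ≠ 0) (hr : ∀ i, ¬IsOfFinOrder (r i)) {v : V}
    (hv : v ∈ T (w₀ • lam)) (hv₀ : v ≠ 0) : T (w₀ • lam) = Submodule.span 𝕜 {v} := by
  have := (R.longest_dual L hr₀ hr).eq_span_singleton L.linearIndependent (v := v)
    (by rwa [neg_neg]) hv₀
  rwa [neg_neg] at this

theorem stableClosure_longest_eq_top (R : IsSimpleHighestWeightRep r a X Y T lam)
    (L : IsLongestElement a s w₀) (hr₀ : ∀ i, r i ≠ 0) (hr : ∀ i, ¬IsOfFinOrder (r i)) :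
    stableClosure X (T (w₀ • lam)) = ⊤ := by
  have := (R.longest_dual L hr₀ hr).stableClosure_eq_top
  rwa [neg_neg] at this

theorem eq_bot_of_apply_eq_zero (R : IsSimpleHighestWeightRep r a X Y T lam)
    (L : IsLongestElement a s w₀) (hr₀ : ∀ i, r i ≠ 0) (hr : ∀ i, ¬IsOfFinOrder (r i)) {k : ι}
    (hk : lam k = 0) : T (lam - simpleRoot a k) = ⊥ := by
  by_contra hne
  have hmem := R.sub_mem_posRootCone (R.smul_ne_bot L.toIsWeylAction hr₀ hr (s k) hne)
  rw [smul_sub, L.simple_smul_simpleRoot, L.simple_smul, hk, zero_smul, sub_zero, sub_neg_eq_add,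
    sub_add_cancel_left] at hmem
  exact L.simpleRoot_ne_zero k
    (eq_zero_of_neg_mem_posRootCone L.linearIndependent (simpleRoot_mem_posRootCone k) hmem)

variable {i : ι}

theorem sub_simpleRoot_eq_bot_or_eq (R : IsSimpleHighestWeightRep r a X Y T (Pi.single i 1))
    (L : IsLongestElement a s w₀) (hr₀ : ∀ i, r i ≠ 0) (hr : ∀ i, ¬IsOfFinOrder (r i)) (k : ι) :
    T (Pi.single i 1 - simpleRoot a k) = ⊥ ∨
      (Pi.single i 1 - simpleRoot a k : ι → ℤ) = s i • (Pi.single i 1 : ι → ℤ) := by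
  rcases eq_or_ne k i with rfl | hk
  · right
    rw [L.simple_smul, Pi.single_eq_same, one_smul]
  · exact Or.inl (R.eq_bot_of_apply_eq_zero L hr₀ hr (Pi.single_eq_of_ne hk 1))

-- If `w₀ϖ_i + α_k` is a weight then so is `ϖ_i + w₀α_k`, which thus lies below `s_iϖ_i`; writing
-- `α_k` as a sum of `-w₀α_i` and another element of `Q⁺` then forces `α_k = -w₀α_i`.
theorem longest_add_simpleRoot_eq_bot_or_eq
    (R : IsSimpleHighestWeightRep r a X Y T (Pi.single i 1)) (L : IsLongestElement a s w₀)
    (hr₀ : ∀ i, r i ≠ 0) (hr : ∀ i, ¬IsOfFinOrder (r i)) (k : ι) :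
    T (w₀ • (Pi.single i 1 : ι → ℤ) + simpleRoot a k) = ⊥ ∨
      w₀ • (Pi.single i 1 : ι → ℤ) + simpleRoot a k = w₀ • s i • (Pi.single i 1 : ι → ℤ) := by
  refine or_iff_not_imp_left.mpr fun hne => ?_
  have hwt := R.smul_ne_bot L.toIsWeylAction hr₀ hr w₀ hne
  rw [smul_add, L.smul_smul_self] at hwt
  have hne' : (Pi.single i 1 + w₀ • simpleRoot a k : ι → ℤ) ≠ Pi.single i 1 := fun h =>
    L.smul_simpleRoot_ne_zero k (add_eq_left.mp h)
  have hbelow := L.neg_smul_mem_posRootCone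
    ((R.eq_or_sub_mem_posRootCone (R.sub_simpleRoot_eq_bot_or_eq L hr₀ hr) hwt).resolve_left hne')
  have hsimple : s i • (Pi.single i 1 : ι → ℤ) = Pi.single i 1 - simpleRoot a i := by
    rw [L.simple_smul, Pi.single_eq_same, one_smul]
  have hsplit : -(w₀ • simpleRoot a i) +
      -(w₀ • (s i • (Pi.single i 1 : ι → ℤ) - (Pi.single i 1 + w₀ • simpleRoot a k))) =
        simpleRoot a k := by
    rw [hsimple, smul_sub, smul_sub, smul_add, L.smul_smul_self]
    abel
  rcases eq_zero_or_eq_zero_of_add_eq_simpleRoot L.linearIndependent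
    (L.neg_smul_mem_posRootCone (simpleRoot_mem_posRootCone i)) hbelow hsplit with h | h
  · exact absurd (neg_eq_zero.mp h) (L.smul_simpleRoot_ne_zero i)
  · rw [h, add_zero] at hsplit
    rw [hsimple, smul_sub, ← hsplit, sub_eq_add_neg]

theorem dualAnnihilator_lower_simple (R : IsSimpleHighestWeightRep r a X Y T (Pi.single i 1))
    (L : IsLongestElement a s w₀) (hr₀ : ∀ i, r i ≠ 0) (hr : ∀ i, ¬IsOfFinOrder (r i))
    {ξ : Module.Dual 𝕜 V} (hξ : ∀ μ, μ ≠ Pi.single i 1 → ∀ x ∈ T μ, ξ x = 0) (hξ₀ : ξ ≠ 0) :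
    (stableClosure Y (T (s i • (Pi.single i 1 : ι → ℤ)))).dualAnnihilator =
      Submodule.span 𝕜 {ξ} := by
  refine R.dualAnnihilator_stableClosure L.linearIndependent ?_ (fun h => ?_)
    (R.sub_simpleRoot_eq_bot_or_eq L hr₀ hr) hξ hξ₀
  · exact L.sub_smul_mem (Pi.single_nonneg.mpr zero_le_one) (s i)
  · rw [L.simple_smul, Pi.single_eq_same, one_smul, sub_eq_self] at h
    exact L.simpleRoot_ne_zero i h

theorem dualAnnihilator_raise_longest (R : IsSimpleHighestWeightRep r a X Y T (Pi.single i 1))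
    (L : IsLongestElement a s w₀) (hr₀ : ∀ i, r i ≠ 0) (hr : ∀ i, ¬IsOfFinOrder (r i))
    {ξ : Module.Dual 𝕜 V} (hξ : ∀ μ, μ ≠ w₀ • (Pi.single i 1 : ι → ℤ) → ∀ x ∈ T μ, ξ x = 0)
    (hξ₀ : ξ ≠ 0) :
    (stableClosure X (T (w₀ • s i • (Pi.single i 1 : ι → ℤ)))).dualAnnihilator =
      Submodule.span 𝕜 {ξ} := by
  have h := (R.longest_dual L hr₀ hr).dualAnnihilator_stableClosure L.linearIndependent
    (ν := -(w₀ • s i • (Pi.single i 1 : ι → ℤ))) ?_ (fun h => ?_) (fun k => ?_) (ξ := ξ)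
    (fun μ hμ => hξ (-μ) (fun h => hμ (neg_eq_iff_eq_neg.mp h))) hξ₀
  · rwa [neg_neg] at h
  · rw [neg_sub_neg, ← neg_sub, ← smul_sub]
    exact L.neg_smul_mem_posRootCone (L.sub_smul_mem (Pi.single_nonneg.mpr zero_le_one) (s i))
  · rw [neg_inj, smul_left_cancel_iff, L.simple_smul, Pi.single_eq_same, one_smul,
      sub_eq_self] at h
    exact L.simpleRoot_ne_zero i h
  · rw [neg_sub_left, add_comm, neg_neg, neg_inj]
    exact R.longest_add_simpleRoot_eq_bot_or_eq L hr₀ hr k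

end IsSimpleHighestWeightRep

theorem IsWeylAction.isLongestElement [Finite W] {V : (ι → ℕ) → Type*}
    [∀ c, AddCommGroup (V c)] [∀ c, Module 𝕜 (V c)] [∀ c, FiniteDimensional 𝕜 (V c)]
    {X Y : ∀ c, ι → Module.End 𝕜 (V c)} {T : ∀ c, (ι → ℤ) → Submodule 𝕜 (V c)}
    (S : IsWeylAction a s)
    (R : ∀ c, IsSimpleHighestWeightRep r a (X c) (Y c) (T c) fun i => (c i : ℤ))
    (hr₀ : ∀ i, r i ≠ 0) (hr : ∀ i, ¬IsOfFinOrder (r i)) {d : ι → ℤ} (hd : ∀ i, d i ≠ 0)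
    (hsymm : ∀ i j, d i * a i j = d j * a j i) (hw₀ : ∀ μ : ι → ℤ, 0 ≤ μ → w₀ • μ ≤ 0) :
    IsLongestElement a s w₀ where
  toIsWeylAction := S
  smul_nonpos hμ := hw₀ _ hμ
  linearIndependent := S.linearIndependent_simpleRoot hd hsymm
  sub_smul_mem {μ} hμ w := by
    have h := (R fun i => (μ i).toNat).sub_smul_mem_posRootCone S hr₀ hr w
    rwa [funext fun i => Int.toNat_of_nonneg (hμ i)] at h

end ExtremalWeights

section MatrixCoeffIdeal

variable {𝕜 A J : Type*} {V : J → Type*} [CommRing 𝕜] [Ring A] [Algebra 𝕜 A]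
  [∀ j, AddCommGroup (V j)] [∀ j, Module 𝕜 (V j)]

/-- The two-sided ideal generated by the matrix coefficients `B j ξ v` with `v ∈ M j` and
`ξ` orthogonal to `N j`; the ideals `Q⁺_w` and `Q⁻_w` are of this form. -/
def matrixCoeffIdeal (B : ∀ j, Module.Dual 𝕜 (V j) →ₗ[𝕜] V j →ₗ[𝕜] A)
    (M N : ∀ j, Submodule 𝕜 (V j)) : TwoSidedIdeal A :=
  TwoSidedIdeal.span {x | ∃ j, ∃ ξ ∈ (N j).dualAnnihilator, ∃ v ∈ M j, x = B j ξ v}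

variable {B : ∀ j, Module.Dual 𝕜 (V j) →ₗ[𝕜] V j →ₗ[𝕜] A} {M N : ∀ j, Submodule 𝕜 (V j)}

theorem matrixCoeffIdeal_le {P : TwoSidedIdeal A}
    (h : ∀ j, ∀ ξ ∈ (N j).dualAnnihilator, ∀ v ∈ M j, B j ξ v ∈ P) :
    matrixCoeffIdeal B M N ≤ P := by
  refine TwoSidedIdeal.span_le.mpr ?_
  rintro _ ⟨j, ξ, hξ, v, hv, rfl⟩
  exact h j ξ hξ v hv

theorem apply_eq_zero_of_mem_dualAnnihilator {j : J} (hN : N j = ⊤) {ξ : Module.Dual 𝕜 (V j)}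
    (hξ : ξ ∈ (N j).dualAnnihilator) (v : V j) : B j ξ v = 0 := by
  rw [hN, Submodule.dualAnnihilator_top, Submodule.mem_bot] at hξ
  rw [hξ, map_zero, LinearMap.zero_apply]

theorem matrixCoeffIdeal_eq_bot (hN : ∀ j, N j = ⊤) : matrixCoeffIdeal B M N = ⊥ :=
  eq_bot_iff.mpr <| matrixCoeffIdeal_le fun j _ hξ v _ =>
    (TwoSidedIdeal.mem_bot A).mpr (apply_eq_zero_of_mem_dualAnnihilator (hN j) hξ v)

theorem matrixCoeffIdeal_eq_span_singleton {i : J} {ξ : Module.Dual 𝕜 (V i)} {v : V i}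
    (hN : ∀ j, j ≠ i → N j = ⊤) (hNi : (N i).dualAnnihilator = Submodule.span 𝕜 {ξ})
    (hMi : M i = Submodule.span 𝕜 {v}) :
    matrixCoeffIdeal B M N = TwoSidedIdeal.span {B i ξ v} := by
  refine le_antisymm (matrixCoeffIdeal_le fun j η hη u hu => ?_)
    (TwoSidedIdeal.span_le.mpr (Set.singleton_subset_iff.mpr (TwoSidedIdeal.subset_span
      ⟨i, ξ, hNi ▸ Submodule.mem_span_singleton_self ξ, v,
        hMi ▸ Submodule.mem_span_singleton_self v, rfl⟩)))
  rcases eq_or_ne j i with rfl | hj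
  · obtain ⟨t, rfl⟩ := Submodule.mem_span_singleton.mp (hNi ▸ hη)
    obtain ⟨t', rfl⟩ := Submodule.mem_span_singleton.mp (hMi ▸ hu)
    rw [map_smul, map_smul, LinearMap.smul_apply, smul_smul, Algebra.smul_def]
    exact TwoSidedIdeal.mul_mem_left _ _ _ (TwoSidedIdeal.subset_span rfl)
  · rw [apply_eq_zero_of_mem_dualAnnihilator (hN j hj) hη]
    exact zero_mem _

end MatrixCoeffIdeal

section FundamentalIdeals

variable {𝕜 ι W A : Type*} {V : ι → Type*} [Field 𝕜] [DecidableEq ι] [Ring A]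
  [Algebra 𝕜 A] [∀ j, AddCommGroup (V j)] [∀ j, Module 𝕜 (V j)]
  [Group W] [DistribMulAction W (ι → ℤ)] {r : ι → 𝕜} {a : ι → ι → ℤ}
  {X Y : ∀ j, ι → Module.End 𝕜 (V j)} {T : ∀ j, (ι → ℤ) → Submodule 𝕜 (V j)} {s : ι → W} {w₀ : W}
  {B : ∀ j, Module.Dual 𝕜 (V j) →ₗ[𝕜] V j →ₗ[𝕜] A} {i : ι}

theorem matrixCoeffIdeal_lower_longest_eq_bot
    (R : ∀ j, IsSimpleHighestWeightRep r a (X j) (Y j) (T j) (Pi.single j 1))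
    (L : IsLongestElement a s w₀) {M : ∀ j, Submodule 𝕜 (V j)} :
    matrixCoeffIdeal B M
      (fun j => stableClosure (Y j) (T j ((w₀ * w₀) • Pi.single j (1 : ℤ)))) = ⊥ :=
  matrixCoeffIdeal_eq_bot fun j => by
    rw [mul_smul, L.smul_smul_self]
    exact (R j).stableClosure_eq_top

variable [∀ j, FiniteDimensional 𝕜 (V j)]

theorem matrixCoeffIdeal_raise_longest_eq_bot
    (R : ∀ j, IsSimpleHighestWeightRep r a (X j) (Y j) (T j) (Pi.single j 1))
    (L : IsLongestElement a s w₀) (hr₀ : ∀ i, r i ≠ 0) (hr : ∀ i, ¬IsOfFinOrder (r i))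
    {M : ∀ j, Submodule 𝕜 (V j)} :
    matrixCoeffIdeal B M (fun j => stableClosure (X j) (T j (w₀ • Pi.single j (1 : ℤ)))) = ⊥ :=
  matrixCoeffIdeal_eq_bot fun j => (R j).stableClosure_longest_eq_top L hr₀ hr

theorem matrixCoeffIdeal_lower_simple_eq_span
    (R : ∀ j, IsSimpleHighestWeightRep r a (X j) (Y j) (T j) (Pi.single j 1))
    (L : IsLongestElement a s w₀) (hr₀ : ∀ i, r i ≠ 0) (hr : ∀ i, ¬IsOfFinOrder (r i))
    {M : ∀ j, Submodule 𝕜 (V j)} {ξ : Module.Dual 𝕜 (V i)} {v : V i}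
    (hξ : ∀ μ, μ ≠ Pi.single i 1 → ∀ x ∈ T i μ, ξ x = 0) (hξ₀ : ξ ≠ 0)
    (hM : M i = Submodule.span 𝕜 {v}) :
    matrixCoeffIdeal B M
      (fun j => stableClosure (Y j) (T j ((s i * w₀ * w₀) • Pi.single j (1 : ℤ)))) =
        TwoSidedIdeal.span {B i ξ v} := by
  simp only [mul_smul, L.smul_smul_self]
  refine matrixCoeffIdeal_eq_span_singleton (fun j hj => ?_)
    ((R i).dualAnnihilator_lower_simple L hr₀ hr hξ hξ₀) hM
  rw [L.simple_smul_single_of_ne hj]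
  exact (R j).stableClosure_eq_top

theorem matrixCoeffIdeal_raise_simple_eq_span
    (R : ∀ j, IsSimpleHighestWeightRep r a (X j) (Y j) (T j) (Pi.single j 1))
    (L : IsLongestElement a s w₀) (hr₀ : ∀ i, r i ≠ 0) (hr : ∀ i, ¬IsOfFinOrder (r i))
    {M : ∀ j, Submodule 𝕜 (V j)} {ξ : Module.Dual 𝕜 (V i)} {v : V i}
    (hξ : ∀ μ, μ ≠ w₀ • (Pi.single i 1 : ι → ℤ) → ∀ x ∈ T i μ, ξ x = 0) (hξ₀ : ξ ≠ 0)
    (hM : M i = Submodule.span 𝕜 {v}) :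
    matrixCoeffIdeal B M
      (fun j => stableClosure (X j) (T j ((w₀ * s i) • Pi.single j (1 : ℤ)))) =
        TwoSidedIdeal.span {B i ξ v} := by
  simp only [mul_smul]
  refine matrixCoeffIdeal_eq_span_singleton (fun j hj => ?_)
    ((R i).dualAnnihilator_raise_longest L hr₀ hr hξ hξ₀) hM
  rw [L.simple_smul_single_of_ne hj]
  exact (R j).stableClosure_longest_eq_top L hr₀ hr

end FundamentalIdeals

/-- The action through a homomorphism `σ` to the automorphisms of an additive monoid; for the Weyl
group it turns `σ w μ` into `w • μ`. -/
abbrev actionOfAddAut {W P : Type*} [Group W] [AddMonoid P] (σ : W →* Multiplicative (AddAut P)) :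
    DistribMulAction W P where
  smul w μ := (σ w).toAdd μ
  one_smul μ := by
    change (σ 1).toAdd μ = μ
    rw [map_one]
    rfl
  mul_smul w w' μ := by
    change (σ (w * w')).toAdd μ = (σ w).toAdd ((σ w').toAdd μ)
    rw [map_mul]
    rfl
  smul_zero w := map_zero (σ w).toAdd
  smul_add w := map_add (σ w).toAdd

theorem natCast_single_one {ι : Type*} [DecidableEq ι] (j : ι) :
    (fun k => ((Pi.single j 1 : ι → ℕ) k : ℤ)) = Pi.single j 1 := by
  funext k
  rcases eq_or_ne k j with rfl | h
  · simp
  · simp [h]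

theorem neg_natCast_single_one {ι : Type*} [DecidableEq ι] (j : ι) :
    (fun k => -((Pi.single j 1 : ι → ℕ) k : ℤ)) = -Pi.single j 1 :=
  congrArg (-·) (natCast_single_one j)

section QuantumGroup

variable {q : ℂ} {n : ℕ} {a : Fin n → Fin n → ℤ} {d : Fin n → ℕ} {U : Type} [Ring U] [Algebra ℂ U]
  {E F : Fin n → U} {K : Fin n → Uˣ} {V : Type} [AddCommGroup V] [Module ℂ V]
  {ρ : U →ₐ[ℂ] Module.End ℂ V}

theorem UqRels.of_injective {B : Type} [Ring B] [Algebra ℂ B] {E' F' : Fin n → B}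
    {K' : Fin n → Bˣ} {φ : B →ₐ[ℂ] U} (hφ : Function.Injective φ)
    (h : UqRels q a d U (fun i => φ (E' i)) (fun i => φ (F' i))
      fun i => Units.map φ.toMonoidHom (K' i)) : UqRels q a d B E' F' K' := by
  obtain ⟨hKK, hKE, hKF, hEF, hE, hF⟩ := h
  refine ⟨fun i j => hφ ?_, fun i j => hφ ?_, fun i j => hφ ?_, fun i j => hφ ?_,
    fun i j hij => hφ ?_, fun i j hij => hφ ?_⟩
  · simpa using hKK i j
  · simpa using hKE i j
  · simpa using hKF i j
  · have := hEF i j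
    split_ifs at this ⊢ <;> simpa using this
  · simpa using hE i j hij
  · simpa using hF i j hij

theorem adjoin_generators_eq_top (hrel : UqRels q a d U E F K)
    (huniv : ∀ (B : Type) [Ring B] [Algebra ℂ B] (E' F' : Fin n → B) (K' : Fin n → Bˣ),
      UqRels q a d B E' F' K' → ∃! φ : U →ₐ[ℂ] B,
        (∀ i, φ (E i) = E' i) ∧ (∀ i, φ (F i) = F' i) ∧ (∀ i, φ (K i : U) = (K' i : B))) :
    Algebra.adjoin ℂ (Set.range E ∪ Set.range F ∪ Set.range (fun i => (K i : U)) ∪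
      Set.range (fun i => (((K i)⁻¹ : Uˣ) : U))) = ⊤ := by
  set B := Algebra.adjoin ℂ (Set.range E ∪ Set.range F ∪ Set.range (fun i => (K i : U)) ∪
    Set.range (fun i => (((K i)⁻¹ : Uˣ) : U)))
  let E' : Fin n → B := fun i => ⟨E i, Algebra.subset_adjoin (by simp)⟩
  let F' : Fin n → B := fun i => ⟨F i, Algebra.subset_adjoin (by simp)⟩
  let K' : Fin n → Bˣ := fun i => ⟨⟨K i, Algebra.subset_adjoin (by simp)⟩,
    ⟨((K i)⁻¹ : Uˣ), Algebra.subset_adjoin (by simp)⟩, Subtype.ext (K i).mul_inv,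
    Subtype.ext (K i).inv_mul⟩
  have hK' : (fun i => Units.map B.val.toMonoidHom (K' i)) = K := funext fun i => Units.ext rfl
  have hrel' : UqRels q a d B E' F' K' :=
    UqRels.of_injective (φ := B.val) Subtype.val_injective (by rwa [hK'])
  obtain ⟨φ, ⟨hE, hF, hK⟩, -⟩ := huniv B E' F' K' hrel'
  have hid : B.val.comp φ = AlgHom.id ℂ U := (huniv U E F K hrel).unique
    ⟨fun i => congrArg B.val (hE i), fun i => congrArg B.val (hF i),
      fun i => congrArg B.val (hK i)⟩
    ⟨fun _ => rfl, fun _ => rfl, fun _ => rfl⟩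
  refine eq_top_iff.mpr fun x _ => ?_
  rw [← AlgHom.id_apply (R := ℂ) x, ← hid]
  exact (φ x).2

theorem demazure_range_eq_stableClosure {ι : Type*} (G : ι → U) (ν : Fin n → ℤ) :
    demazure q d (Set.range G) K ρ ν = stableClosure (fun k => ρ (G k)) (wtSp q d K ρ ν) := by
  apply le_antisymm
  · refine Submodule.span_le.mpr ?_
    rintro _ ⟨y, hy, u, hu, rfl⟩
    refine adjoin_apply_mem (Set.forall_mem_range.mpr fun k => ?_) hy (le_stableClosure hu)
    exact stableClosure_mem_invtSubmodule (f := fun k => ρ (G k)) k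
  · refine stableClosure_le (fun u hu => Submodule.subset_span ⟨1, one_mem _, u, hu, ?_⟩)
      fun k => (Module.End.mem_invtSubmodule _).mpr (Submodule.span_le.mpr ?_)
    · rw [map_one, Module.End.one_apply]
    · rintro _ ⟨y, hy, u, hu, rfl⟩
      refine Submodule.subset_span
        ⟨G k * y, mul_mem (Algebra.subset_adjoin ⟨k, rfl⟩) hy, u, hu, ?_⟩
      rw [map_mul, Module.End.mul_apply]

theorem mem_wtSp {μ : Fin n → ℤ} {x : V} :
    x ∈ wtSp q d K ρ μ ↔ ∀ i, ρ (K i : U) x = q ^ (μ i * (d i : ℤ)) • x := by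
  simp [wtSp, sub_eq_zero]

theorem inv_apply_of_mem_wtSp (hq₀ : q ≠ 0) {μ : Fin n → ℤ} {x : V} (hx : x ∈ wtSp q d K ρ μ)
    (i : Fin n) : ρ ((K i)⁻¹ : Uˣ) x = q ^ (-(μ i * (d i : ℤ))) • x := by
  have h : ρ ((K i)⁻¹ : Uˣ) (ρ (K i : U) x) = x := by
    rw [← Module.End.mul_apply, ← map_mul, Units.inv_mul, map_one, Module.End.one_apply]
  rw [mem_wtSp.mp hx, map_smul] at h
  rw [zpow_neg, eq_inv_smul_iff₀ (zpow_ne_zero _ hq₀), h]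

theorem apply_mem_wtSp_add (hq₀ : q ≠ 0) {g : U} {α : Fin n → ℤ}
    (hg : ∀ i, (K i : U) * g = q ^ (α i * (d i : ℤ)) • (g * (K i : U))) {μ : Fin n → ℤ} {x : V}
    (hx : x ∈ wtSp q d K ρ μ) : ρ g x ∈ wtSp q d K ρ (μ + α) := by
  refine mem_wtSp.mpr fun i => ?_
  rw [← Module.End.mul_apply, ← map_mul, hg, map_smul, map_mul, LinearMap.smul_apply,
    Module.End.mul_apply, mem_wtSp.mp hx, map_smul, smul_smul, ← zpow_add₀ hq₀, Pi.add_apply,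
    add_mul, add_comm]

theorem iSupIndep_wtSp (hq₀ : q ≠ 0) (hq : ¬IsOfFinOrder q) (hd : ∀ i, d i ≠ 0)
    (hK : ∀ i j, (K i : U) * (K j : U) = (K j : U) * (K i : U)) :
    iSupIndep (wtSp q d K ρ) := by
  have hind := Module.End.independent_iInf_maxGenEigenspace_of_forall_mapsTo
    (fun i => ρ (K i : U)) fun i j φ => Module.End.mapsTo_maxGenEigenspace_of_comm
      (Commute.map (show Commute (K j : U) (K i : U) from hK j i) ρ) φ
  have hinj : Function.Injective fun (μ : Fin n → ℤ) i => q ^ (μ i * (d i : ℤ)) := by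
    intro μ ν h
    funext i
    have hi : q ^ (μ i * (d i : ℤ)) = q ^ (ν i * (d i : ℤ)) := congrFun h i
    by_contra hne
    refine hq (isOfFinOrder_iff_zpow_eq_one.mpr ⟨(μ i - ν i) * d i,
      mul_ne_zero (sub_ne_zero.mpr hne) (Nat.cast_ne_zero.mpr (hd i)), ?_⟩)
    rw [sub_mul, zpow_sub₀ hq₀, hi, div_self (zpow_ne_zero _ hq₀)]
  refine (hind.comp hinj).mono fun μ x hx => (Submodule.mem_iInf _).mpr fun i => ?_
  exact Module.End.eigenspace_le_maxGenEigenspace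
    (Module.End.mem_eigenspace_iff.mpr (mem_wtSp.mp hx i))

theorem UqRels.isWeightRep (hrel : UqRels q a d U E F K) (hq₀ : q ≠ 0) (hq : ¬IsOfFinOrder q)
    (hd : ∀ i, d i ≠ 0) :
    IsWeightRep (fun i => q ^ d i) a (fun k => ρ (E k)) (fun k => ρ (F k)) (wtSp q d K ρ) where
  raise_mem k μ x hx := apply_mem_wtSp_add hq₀ (fun i => by
    rw [hrel.2.1, simpleRoot, mul_comm]) hx
  lower_mem k μ x hx := by
    rw [sub_eq_add_neg]
    refine apply_mem_wtSp_add hq₀ (fun i => ?_) hx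
    rw [hrel.2.2.1, Pi.neg_apply, simpleRoot, neg_mul, mul_comm (a i k)]
  commutator i j μ x hx := by
    have h := congrArg (fun u => ρ u x) (hrel.2.2.2.1 i j)
    simp only [map_sub, map_mul, Module.End.mul_apply, LinearMap.sub_apply] at h
    rw [h]
    split_ifs
    · rw [map_smul, map_sub, LinearMap.smul_apply, LinearMap.sub_apply, mem_wtSp.mp hx,
        inv_apply_of_mem_wtSp hq₀ hx, ← sub_smul, smul_smul, quantumInt, div_eq_inv_mul,
        ← zpow_natCast q, ← zpow_mul, ← zpow_mul, ← zpow_neg, mul_neg, mul_comm (d i : ℤ)]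
    · rw [map_zero, LinearMap.zero_apply]
  independent := iSupIndep_wtSp hq₀ hq hd hrel.1

theorem UqRels.isSimpleHighestWeightRep (hrel : UqRels q a d U E F K)
    (hgen : Algebra.adjoin ℂ (Set.range E ∪ Set.range F ∪ Set.range (fun i => (K i : U)) ∪
      Set.range (fun i => (((K i)⁻¹ : Uˣ) : U))) = ⊤)
    (hq₀ : q ≠ 0) (hq : ¬IsOfFinOrder q) (hd : ∀ i, d i ≠ 0)
    (hsimple : ∀ N : Submodule ℂ V, (∀ u, ∀ v ∈ N, ρ u v ∈ N) → N = ⊥ ∨ N = ⊤) {lam : Fin n → ℤ}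
    (hhw : ∃ v : V, v ≠ 0 ∧ v ∈ wtSp q d K ρ lam ∧ ∀ i, ρ (E i) v = 0) :
    IsSimpleHighestWeightRep (fun i => q ^ d i) a (fun k => ρ (E k)) (fun k => ρ (F k))
      (wtSp q d K ρ) lam where
  toIsWeightRep := hrel.isWeightRep hq₀ hq hd
  eq_bot_or_eq_top N hN hE hF := by
    refine hsimple N fun u v hv => adjoin_apply_mem ?_ (hgen ▸ Algebra.mem_top : u ∈ _) hv
    rintro _ (((⟨k, rfl⟩ | ⟨k, rfl⟩) | ⟨k, rfl⟩) | ⟨k, rfl⟩)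
    · exact hE k
    · exact hF k
    · exact mem_invtSubmodule_of_smul_on hN fun μ x hx => mem_wtSp.mp hx k
    · exact mem_invtSubmodule_of_smul_on hN fun μ x hx => inv_apply_of_mem_wtSp hq₀ hx k
  exists_highest := by
    obtain ⟨v, hv₀, hv, hEv⟩ := hhw
    exact ⟨v, hv, hv₀, hEv⟩

section CoordinateRing

variable {V : (Fin n → ℕ) → Type} [∀ c, AddCommGroup (V c)] [∀ c, Module ℂ (V c)]
  {ρ : ∀ c, U →ₐ[ℂ] Module.End ℂ (V c)} {W : Type} [Group W] [DistribMulAction W (Fin n → ℤ)]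
  {σ : W →* Multiplicative (AddAut (Fin n → ℤ))} {A : Type} [Ring A] [Algebra ℂ A]
  {cf : ∀ c : Fin n → ℕ, Module.Dual ℂ (V c) → V c → A}

theorem exists_bilinear_eq_matrixCoeff {ι : A →ₗ[ℂ] (U →ₗ[ℂ] ℂ)} (hι : Function.Injective ι)
    (hcf : ∀ c ξ v u, ι (cf c ξ v) u = ξ (ρ c u v)) :
    ∃ B : ∀ c, Module.Dual ℂ (V c) →ₗ[ℂ] V c →ₗ[ℂ] A, cf = fun c ξ v => B c ξ v := by
  refine ⟨fun c => LinearMap.mk₂ ℂ (cf c) (fun ξ η v => ?_) (fun t ξ v => ?_) (fun ξ v w => ?_)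
    (fun t ξ v => ?_), rfl⟩ <;>
  exact hι (LinearMap.ext fun u => by simp [hcf])

variable {B : ∀ c, Module.Dual ℂ (V c) →ₗ[ℂ] V c →ₗ[ℂ] A}

theorem Qplus_eq_matrixCoeffIdeal (hσ : ∀ w μ, σ w μ = w • μ) (w : W) :
    Qplus q d E K ρ σ (fun c ξ v => B c ξ v) w =
      matrixCoeffIdeal (fun j => B (Pi.single j 1))
        (fun j => wtSp q d K (ρ (Pi.single j 1)) (Pi.single j 1))
        fun j => stableClosure (fun k => ρ (Pi.single j 1) (E k))
          (wtSp q d K (ρ (Pi.single j 1)) (w • Pi.single j (1 : ℤ))) := by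
  simp only [Qplus, matrixCoeffIdeal, natCast_single_one, hσ, demazure_range_eq_stableClosure,
    Submodule.mem_dualAnnihilator, ← exists_and_left, and_left_comm]


theorem Qminus_eq_matrixCoeffIdeal (hσ : ∀ w μ, σ w μ = w • μ) (w₀ w : W) :
    Qminus q d F K ρ σ w₀ (fun c ξ v => B c ξ v) w =
      matrixCoeffIdeal (fun j => B (Pi.single j 1))
        (fun j => wtSp q d K (ρ (Pi.single j 1)) (w₀ • Pi.single j (1 : ℤ)))
        fun j => stableClosure (fun k => ρ (Pi.single j 1) (F k))
          (wtSp q d K (ρ (Pi.single j 1)) ((w * w₀) • Pi.single j (1 : ℤ))) := by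
  simp only [Qminus, matrixCoeffIdeal, natCast_single_one, hσ, demazure_range_eq_stableClosure,
    Submodule.mem_dualAnnihilator, ← exists_and_left, and_left_comm]


end CoordinateRing

end QuantumGroup

theorem generator_height_one_H_primes_general
    {q : ℂ} (hq₀ : q ≠ 0) (hq : ¬IsOfFinOrder q)
    {n : ℕ} {a : Fin n → Fin n → ℤ} {d : Fin n → ℕ}
    (ha_diag : ∀ i, a i i = 2) (hd_pos : ∀ i, 0 < d i)
    (ha_symm : ∀ i j, (d i : ℤ) * a i j = (d j : ℤ) * a j i)
    {U : Type} [Ring U] [Algebra ℂ U] {E F : Fin n → U} {K : Fin n → Uˣ}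
    (hrel : UqRels q a d U E F K)
    (hgen : Algebra.adjoin ℂ (Set.range E ∪ Set.range F ∪ Set.range (fun i => (K i : U)) ∪
      Set.range (fun i => (((K i)⁻¹ : Uˣ) : U))) = ⊤)
    {W : Type} [Group W] [Finite W] {σ : W →* Multiplicative (AddAut (Fin n → ℤ))}
    {s : Fin n → W} (hsgen : Subgroup.closure (Set.range s) = ⊤)
    (hs : ∀ i (μ : Fin n → ℤ), σ (s i) μ = fun k => μ k - μ i * a k i)
    {w₀ : W} (hw₀ : ∀ μ : Fin n → ℤ, (∀ i, 0 ≤ μ i) → ∀ i, σ w₀ μ i ≤ 0)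
    {V : (Fin n → ℕ) → Type} [∀ c, AddCommGroup (V c)] [∀ c, Module ℂ (V c)]
    [∀ c, FiniteDimensional ℂ (V c)] {ρ : ∀ c, U →ₐ[ℂ] Module.End ℂ (V c)}
    (hsimple : ∀ c (N : Submodule ℂ (V c)), (∀ (u : U), ∀ v ∈ N, ρ c u v ∈ N) → N = ⊥ ∨ N = ⊤)
    (hhw : ∀ c, ∃ v : V c, v ≠ 0 ∧ v ∈ wtSp q d K (ρ c) (fun i => (c i : ℤ)) ∧
      ∀ i, ρ c (E i) v = 0)
    {A : Type} [Ring A] [Algebra ℂ A]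
    {ι : A →ₗ[ℂ] (U →ₗ[ℂ] ℂ)} (hιinj : Function.Injective ι)
    {cf : ∀ c : Fin n → ℕ, Module.Dual ℂ (V c) → V c → A}
    (hcf : ∀ c ξ v u, ι (cf c ξ v) u = ξ (ρ c u v)) :
    ∀ i : Fin n,
      (∀ (ξ : Module.Dual ℂ (V (Pi.single i 1))) (v : V (Pi.single i 1)),
        inDualWt q d K (ρ (Pi.single i 1)) (fun k => -((Pi.single i 1 : Fin n → ℕ) k : ℤ)) ξ →
        ξ ≠ 0 →
        v ∈ wtSp q d K (ρ (Pi.single i 1))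
          (σ w₀ (fun k => ((Pi.single i 1 : Fin n → ℕ) k : ℤ))) → v ≠ 0 →
        Qplus q d E K ρ σ cf w₀ ⊔ Qminus q d F K ρ σ w₀ cf (s i * w₀) =
          TwoSidedIdeal.span {cf (Pi.single i 1) ξ v}) ∧
      (∀ (ξ : Module.Dual ℂ (V (Pi.single i 1))) (v : V (Pi.single i 1)),
        inDualWt q d K (ρ (Pi.single i 1))
          (-(σ w₀ (fun k => ((Pi.single i 1 : Fin n → ℕ) k : ℤ)))) ξ → ξ ≠ 0 →
        v ∈ wtSp q d K (ρ (Pi.single i 1)) (fun k => ((Pi.single i 1 : Fin n → ℕ) k : ℤ)) →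
        v ≠ 0 →
        Qplus q d E K ρ σ cf (w₀ * s i) ⊔ Qminus q d F K ρ σ w₀ cf w₀ =
          TwoSidedIdeal.span {cf (Pi.single i 1) ξ v}) := by
  let := actionOfAddAut σ
  have hσ : ∀ w μ, σ w μ = w • μ := fun _ _ => rfl
  have hd : ∀ i, d i ≠ 0 := fun i => (hd_pos i).ne'
  have hr₀ : ∀ i, q ^ d i ≠ 0 := fun i => pow_ne_zero _ hq₀
  have hr : ∀ i, ¬IsOfFinOrder (q ^ d i) := fun i h => hq (h.of_pow (hd i))
  have R := fun c => hrel.isSimpleHighestWeightRep hgen hq₀ hq hd (hsimple c) (hhw c)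
  have S : IsWeylAction a s := ⟨ha_diag, hsgen, hs⟩
  have L : IsLongestElement a s w₀ := S.isLongestElement R hr₀ hr
    (fun i => Nat.cast_ne_zero.mpr (hd i)) ha_symm hw₀
  have Rϖ := fun j : Fin n => natCast_single_one j ▸ R (Pi.single j 1)
  obtain ⟨B, rfl⟩ := exists_bilinear_eq_matrixCoeff hιinj hcf
  simp only [inDualWt, natCast_single_one, neg_natCast_single_one, neg_neg, hσ,
    Qplus_eq_matrixCoeffIdeal hσ, Qminus_eq_matrixCoeffIdeal hσ,
    matrixCoeffIdeal_raise_longest_eq_bot Rϖ L hr₀ hr, matrixCoeffIdeal_lower_longest_eq_bot Rϖ L,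
    bot_sup_eq, sup_bot_eq]
  exact fun i => ⟨
    fun ξ v hξ hξ₀ hv hv₀ => matrixCoeffIdeal_lower_simple_eq_span Rϖ L hr₀ hr hξ hξ₀
      ((Rϖ i).longest_eq_span_singleton L hr₀ hr hv hv₀),
    fun ξ v hξ hξ₀ hv hv₀ => matrixCoeffIdeal_raise_simple_eq_span Rϖ L hr₀ hr hξ hξ₀
      ((Rϖ i).eq_span_singleton L.linearIndependent hv hv₀)⟩

theorem generator_height_one_H_primes
    -- the deformation parameter: a transcendental complex number
    (q : ℂ) (hq : Transcendental ℚ q)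
    -- Cartan data of the complex semisimple Lie algebra 𝔤 of rank n
    (n : ℕ) (hn : 0 < n) (a : Fin n → Fin n → ℤ) (d : Fin n → ℕ)
    (ha_diag : ∀ i, a i i = 2) (ha_off : ∀ i j, i ≠ j → a i j ≤ 0)
    (ha_zero : ∀ i j, a i j = 0 ↔ a j i = 0)
    (hd_pos : ∀ i, 0 < d i)
    (ha_symm : ∀ i j, (d i : ℤ) * a i j = (d j : ℤ) * a j i)
    -- the quantised enveloping algebra U = U_q(𝔤): carries elements E i, F i and units K i
    -- satisfying the defining relations, and is universal for these relations
    (U : Type) [Ring U] [Algebra ℂ U]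
    (E F : Fin n → U) (K : Fin n → Uˣ)
    (hrel : UqRels q a d U E F K)
    (hUuniv : ∀ (B : Type) [Ring B] [Algebra ℂ B] (E' F' : Fin n → B) (K' : Fin n → Bˣ),
      UqRels q a d B E' F' K' → ∃! φ : U →ₐ[ℂ] B,
        (∀ i, φ (E i) = E' i) ∧ (∀ i, φ (F i) = F' i) ∧ (∀ i, φ (K i : U) = (K' i : B)))
    -- the Hopf algebra structure of U_q(𝔤)
    (Δ : U →ₐ[ℂ] U ⊗[ℂ] U) (ε : U →ₐ[ℂ] ℂ)
    (hΔE : ∀ i, Δ (E i) = E i ⊗ₜ 1 + (K i : U) ⊗ₜ E i)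
    (hΔF : ∀ i, Δ (F i) = F i ⊗ₜ (((K i)⁻¹ : Uˣ) : U) + 1 ⊗ₜ F i)
    (hΔK : ∀ i, Δ (K i : U) = (K i : U) ⊗ₜ (K i : U))
    (hεE : ∀ i, ε (E i) = 0) (hεF : ∀ i, ε (F i) = 0) (hεK : ∀ i, ε (K i : U) = 1)
    -- the Weyl group W, acting faithfully on the weight lattice P = ℤⁿ (coordinates taken in
    -- the basis of fundamental weights ϖ i), generated by the simple reflections s i, with
    -- longest element w₀ (characterised by: w₀ maps dominant weights to antidominant ones)
    (W : Type) [Group W] [Finite W] (σ : W →* Multiplicative (AddAut (Fin n → ℤ)))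
    (hσinj : Function.Injective σ)
    (s : Fin n → W) (hsgen : Subgroup.closure (Set.range s) = ⊤)
    (hs : ∀ i (μ : Fin n → ℤ), σ (s i) μ = fun k => μ k - μ i * a k i)
    (w₀ : W) (hw₀ : ∀ μ : Fin n → ℤ, (∀ i, 0 ≤ μ i) → ∀ i, σ w₀ μ i ≤ 0)
    -- the simple finite-dimensional modules V(λ) of highest weight λ = ∑ c i ϖ i ∈ P⁺
    (V : (Fin n → ℕ) → Type) [∀ c, AddCommGroup (V c)] [∀ c, Module ℂ (V c)]
    (ρ : ∀ c, U →ₐ[ℂ] Module.End ℂ (V c))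
    (hfd : ∀ c, FiniteDimensional ℂ (V c))
    (hsimple : ∀ c (N : Submodule ℂ (V c)), (∀ (u : U), ∀ v ∈ N, ρ c u v ∈ N) → N = ⊥ ∨ N = ⊤)
    (hhw : ∀ c, ∃ v : V c, v ≠ 0 ∧ v ∈ wtSp q d K (ρ c) (fun i => (c i : ℤ)) ∧
      ∀ i, ρ c (E i) v = 0)
    (hwtsum : ∀ c, (⨆ μ : Fin n → ℤ, wtSp q d K (ρ c) μ) = ⊤)
    (hextremal : ∀ c (w : W),
      Module.finrank ℂ (wtSp q d K (ρ c) (σ w (fun i => (c i : ℤ)))) = 1)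
    -- the quantised coordinate ring A = O_q(G): an algebra of linear forms on U (via the
    -- injection ι into the dual space, multiplication being convolution through Δ),
    -- generated by the coordinate functions cf c ξ v = c^λ_{ξ,v} : u ↦ ξ (u · v)
    (A : Type) [Ring A] [Algebra ℂ A]
    (ι : A →ₗ[ℂ] (U →ₗ[ℂ] ℂ)) (hιinj : Function.Injective ι)
    (hι1 : ι 1 = ε.toLinearMap)
    (hιmul : ∀ x y : A, ι (x * y) =
      (TensorProduct.lid ℂ ℂ).toLinearMap ∘ₗ (TensorProduct.map (ι x) (ι y)) ∘ₗ Δ.toLinearMap)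
    (cf : ∀ c : Fin n → ℕ, Module.Dual ℂ (V c) → V c → A)
    (hcf : ∀ c ξ v u, ι (cf c ξ v) u = ξ (ρ c u v))
    (hAgen : Algebra.adjoin ℂ {x : A | ∃ c ξ v, x = cf c ξ v} = ⊤) :
    -- Q_{w₀, s_i w₀} = ⟨c^{ϖ_i}_{-ϖ_i, w₀ϖ_i}⟩ and Q_{w₀ s_i, w₀} = ⟨c^{ϖ_i}_{-w₀ϖ_i, ϖ_i}⟩
    ∀ i : Fin n,
      (∀ (ξ : Module.Dual ℂ (V (Pi.single i 1))) (v : V (Pi.single i 1)),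
        inDualWt q d K (ρ (Pi.single i 1)) (fun k => -((Pi.single i 1 : Fin n → ℕ) k : ℤ)) ξ → ξ ≠ 0 →
        v ∈ wtSp q d K (ρ (Pi.single i 1)) (σ w₀ (fun k => ((Pi.single i 1 : Fin n → ℕ) k : ℤ))) → v ≠ 0 →
        Qplus q d E K ρ σ cf w₀ ⊔ Qminus q d F K ρ σ w₀ cf (s i * w₀) =
          TwoSidedIdeal.span {cf (Pi.single i 1) ξ v}) ∧
      (∀ (ξ : Module.Dual ℂ (V (Pi.single i 1))) (v : V (Pi.single i 1)),
        inDualWt q d K (ρ (Pi.single i 1)) (-(σ w₀ (fun k => ((Pi.single i 1 : Fin n → ℕ) k : ℤ)))) ξ → ξ ≠ 0 →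
        v ∈ wtSp q d K (ρ (Pi.single i 1)) (fun k => ((Pi.single i 1 : Fin n → ℕ) k : ℤ)) → v ≠ 0 →
        Qplus q d E K ρ σ cf (w₀ * s i) ⊔ Qminus q d F K ρ σ w₀ cf w₀ =
          TwoSidedIdeal.span {cf (Pi.single i 1) ξ v}) := by
  exact generator_height_one_H_primes_general (by rintro rfl; exact hq isAlgebraic_zero)
    (not_isOfFinOrder_of_transcendental hq) ha_diag hd_pos ha_symm hrel
    (adjoin_generators_eq_top hrel hUuniv) hsgen hs hw₀ hsimple hhw hιinj hcf
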